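/- arXiv:1802.04586 — 2 statements merged into one kernel-verified Lean document; each statement's English description precedes it below -/
import Mathlib

section
/- Let k ≥ 3, 1 ≤ ℓ ≤ k−1, a ≥ max{1, ℓ/(k−ℓ)} be integers, and suppose 0 < ε ≤ ℓ/(3a) and 1/n ≪ 1/C ≪ γ, 1/a, 1/k. Let G = 𝔾^{(k)}(n,p) on vertex set V, where p ≥ n^{−(k−ℓ)−ε} if ℓ ≥ 2 and p ≥ C·n^{−(k−1)} if ℓ = 1. Let L be a family of ℓ-subsets of V. Then for every pair of subsets R, V* ⊆ V with |V*| ≥ γn and |L ∩ binom(R,ℓ)| ≥ γn^ℓ, with probability at least 1 − exp(−3n), G contains a copy of the ℓ-path P_a whose two ℓ-ends both lie in L ∩ binom(R,ℓ) and all of whose other vertices lie in V*. Moreover, this property holds simultaneously for all choices of R and V* with probability 1 − o(1). -/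
open Finset
open scoped Classical

/-- All `k`-subsets of `Fin n` (the possible edges of a `k`-graph on `n` vertices). -/
def kSets (n k : ℕ) : Finset (Finset (Fin n)) := Finset.univ.powersetCard k

/-- The probability that the binomial random `k`-graph `G^{(k)}(n,p)` (each `k`-set is an
edge independently with probability `p`) has an edge set satisfying the property `A`. -/
noncomputable def gProb (n k : ℕ) (p : ℝ) (A : Finset (Finset (Fin n)) → Prop) : ℝ :=
  ∑ E ∈ (kSets n k).powerset.filter (fun E => A E),
    p ^ E.card * (1 - p) ^ ((kSets n k).card - E.card)

/-- Expectation of a random variable `f` of the random `k`-graph `G^{(k)}(n,p)`. -/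
noncomputable def gExpect (n k : ℕ) (p : ℝ) (f : Finset (Finset (Fin n)) → ℝ) : ℝ :=
  ∑ E ∈ (kSets n k).powerset,
    p ^ E.card * (1 - p) ^ ((kSets n k).card - E.card) * f E

/-- The degree of a vertex set `S` in the `k`-graph with edge set `E`: the number of edges
containing `S` (equivalently, the number of `(k-|S|)`-sets `T` with `S ∪ T ∈ E`). -/
def degOf {n : ℕ} (E : Finset (Finset (Fin n))) (S : Finset (Fin n)) : ℕ :=
  (E.filter (fun e => S ⊆ e)).card

/-- The minimum vertex degree (minimum 1-degree) of a `k`-graph. -/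
noncomputable def minVertexDeg {n : ℕ} (E : Finset (Finset (Fin n))) : ℕ :=
  sInf {d : ℕ | ∃ v : Fin n, degOf E {v} = d}

/-- The index set of the `i`-th edge of the path `P_{a,x}`:
`{x + i*d, x + i*d + 1, …, x + i*d + k - 1}` (here `d = k - ℓ`). -/
def edgeIdx (k d x i : ℕ) : Finset ℕ := (Finset.range k).image (fun j => x + i * d + j)

/-- The ordered `b`-tuple `w` spans a labeled copy of `P_{a,x}` (the `k`-uniform `ℓ`-path
with `a` edges, preceded and followed by `x` isolated vertices) in the edge set `E`. -/
def SpansPax {n : ℕ} (k ℓ a x : ℕ) (E : Finset (Finset (Fin n))) {b : ℕ}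
    (w : Fin b → Fin n) : Prop :=
  Function.Injective w ∧
  ∀ i < a,
    ((Finset.univ.filter (fun m : Fin b => (m : ℕ) ∈ edgeIdx k (k - ℓ) x i)).image w) ∈ E

/-- The ordered tuple `w` spans a labeled copy of the `ℓ`-path `P_a` of length `a` in `E`. -/
def SpansPath {n : ℕ} (k ℓ a : ℕ) (E : Finset (Finset (Fin n))) {b : ℕ}
    (w : Fin b → Fin n) : Prop :=
  SpansPax k ℓ a 0 E w

/-- The first `ℓ`-end of the ordered tuple `w` (its first `ℓ` vertices, as a set). -/
def firstEnd {n b : ℕ} (ℓ : ℕ) (w : Fin b → Fin n) : Finset (Fin n) :=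
  (Finset.univ.filter (fun m : Fin b => (m : ℕ) < ℓ)).image w

/-- The last `ℓ`-end of the ordered tuple `w` (its last `ℓ` vertices, as a set). -/
def lastEnd {n b : ℕ} (ℓ : ℕ) (w : Fin b → Fin n) : Finset (Fin n) :=
  (Finset.univ.filter (fun m : Fin b => b - ℓ ≤ (m : ℕ))).image w

/-- The `k`-graph with edge set `E` on vertex set `Fin n` contains a Hamiltonian `ℓ`-cycle:
there is a cyclic ordering of all `n` vertices such that each of the `n/(k-ℓ)` edges
consists of `k` consecutive vertices, consecutive edges overlapping in `ℓ` vertices. -/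
def IsHamCycle (n k ℓ : ℕ) (E : Finset (Finset (Fin n))) : Prop :=
  ∃ f : ZMod n → Fin n, Function.Bijective f ∧
    ∀ i < n / (k - ℓ),
      ((Finset.range k).image (fun j => f (((i * (k - ℓ) + j : ℕ) : ZMod n)))) ∈ E

/-- The `ℓ`-shadow of a `k`-graph: all `ℓ`-sets contained in some edge. -/
def shadowL {n : ℕ} (ℓ : ℕ) (E : Finset (Finset (Fin n))) : Finset (Finset (Fin n)) :=
  (Finset.univ.powersetCard ℓ).filter (fun S => ∃ e ∈ E, S ⊆ e)

/-- The list `v` of vertices spans a copy of the `ℓ`-path `P_a` of length `a` in `E`. -/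
def ListSpans {n : ℕ} (k ℓ a : ℕ) (E : Finset (Finset (Fin n))) (v : List (Fin n)) : Prop :=
  v.Nodup ∧ v.length = a * (k - ℓ) + ℓ ∧
    ∀ i < a, ((v.drop (i * (k - ℓ))).take k).toFinset ∈ E

/-- `Φ_F(n,p) = min { n^{v_H} p^{e_H} : H ⊆ F, e_H > 0 }`, where the subgraph `H` is given
by a nonempty edge set `E' ⊆ F` together with a vertex set `W` containing all its edges. -/
noncomputable def Phi {V : Type*} (n : ℕ) (p : ℝ) (F : Finset (Finset V)) : ℝ :=
  sInf {r : ℝ | ∃ (W : Finset V) (E' : Finset (Finset V)),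
    E' ⊆ F ∧ E'.Nonempty ∧ (∀ e ∈ E', e ⊆ W) ∧ r = (n : ℝ) ^ W.card * p ^ E'.card}

/-- The ordered tuple `w` spans a labeled copy of the `k`-graph `F` (given by its edge set
`Fe` on vertex set `Fin s`) in the edge set `E`. -/
def SpansCopy {n s : ℕ} (Fe : Finset (Finset (Fin s))) (E : Finset (Finset (Fin n)))
    (w : Fin s → Fin n) : Prop :=
  ∀ e ∈ Fe, e.image w ∈ E

/-- Concatenation of three ordered tuples. -/
def concat3 {n p q r : ℕ} (A : Fin p → Fin n) (C : Fin q → Fin n) (B : Fin r → Fin n)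
    (m : Fin (p + q + r)) : Fin n :=
  if h : (m : ℕ) < p then A ⟨(m : ℕ), h⟩
  else if h2 : (m : ℕ) < p + q then C ⟨(m : ℕ) - p, by omega⟩
  else B ⟨(m : ℕ) - (p + q), by have := m.isLt; omega⟩

/-- `w`, spanning an `ℓ`-path of length `a`, is a `W`-absorber in `E`: it avoids `W`, and
its vertex set together with `W` spans an `ℓ`-path (of length `a+1` when `|W| = k - ℓ`)
with the same two `ℓ`-ends. -/
def IsAbsorber {n : ℕ} (k ℓ a : ℕ) (E : Finset (Finset (Fin n))) {b : ℕ}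
    (w : Fin b → Fin n) (W : Finset (Fin n)) : Prop :=
  (∀ m, w m ∉ W) ∧
  ∃ w' : Fin (b + W.card) → Fin n, SpansPath k ℓ (a + 1) E w' ∧
    Finset.image w' Finset.univ = Finset.image w Finset.univ ∪ W ∧
    firstEnd ℓ w' = firstEnd ℓ w ∧ lastEnd ℓ w' = lastEnd ℓ w


/-- A copy of the `ℓ`-path `P_a` both of whose `ℓ`-ends lie in `L ∩ binom(R,ℓ)` and all of
whose remaining vertices lie in `Vs`. -/
def GoodPath {n : ℕ} (k ℓ a : ℕ) (L : Finset (Finset (Fin n))) (R Vs : Finset (Fin n))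
    (E : Finset (Finset (Fin n))) : Prop :=
  ∃ w : Fin (a * (k - ℓ) + ℓ) → Fin n, SpansPath k ℓ a E w ∧
    firstEnd ℓ w ∈ L ∧ firstEnd ℓ w ⊆ R ∧ lastEnd ℓ w ∈ L ∧ lastEnd ℓ w ⊆ R ∧
    ∀ m : Fin (a * (k - ℓ) + ℓ), ℓ ≤ (m : ℕ) → (m : ℕ) < a * (k - ℓ) → w m ∈ Vs


/-- Product weight on subsets of `Ω`. -/
noncomputable def wt {α : Type*} (Ω : Finset α) (p : ℝ) (E : Finset α) : ℝ :=
  p ^ E.card * (1 - p) ^ (Ω.card - E.card)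

lemma wt_nonneg {α : Type*} (Ω : Finset α) {p : ℝ} (h0 : 0 ≤ p) (h1 : p ≤ 1) (E : Finset α) :
    0 ≤ wt Ω p E := by
  unfold wt
  have : 0 ≤ 1 - p := by linarith
  positivity

lemma wt_sum {α : Type*} (Ω : Finset α) (p : ℝ) : ∑ E ∈ Ω.powerset, wt Ω p E = 1 := by
  unfold wt
  rw [Finset.sum_pow_mul_eq_add_pow]
  simp

lemma wt_cyl_one {α : Type*} [DecidableEq α] (Ω : Finset α) (p : ℝ) (x : α) (hx : x ∈ Ω)
    (g : Finset α → ℝ) :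
    ∑ E ∈ Ω.powerset, wt Ω p E * (if x ∈ E then g E else 0)
      = p * ∑ E ∈ Ω.powerset, wt Ω p E * g (insert x E) := by
  obtain ⟨Ω', hx', rfl⟩ : ∃ Ω', x ∉ Ω' ∧ Ω = insert x Ω' :=
    ⟨Ω.erase x, by simp, by simp [Finset.insert_erase hx]⟩
  rw [Finset.sum_powerset_insert hx', Finset.sum_powerset_insert hx',  ← Finset.sum_add_distrib, ← Finset.sum_add_distrib, Finset.mul_sum]
  refine Finset.sum_congr rfl fun E hE => ?_
  have hE' := Finset.mem_powerset.1 hE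
  have hxE : x ∉ E := fun h => hx' (hE' h)
  have hc := Finset.card_le_card hE'
  unfold wt
  simp only [hxE, if_false, Finset.mem_insert_self, if_true, Finset.card_insert_of_notMem hx',
    Finset.card_insert_of_notMem hxE, Finset.insert_idem]
  rw [show Ω'.card + 1 - (E.card + 1) = Ω'.card - E.card by omega,
    show Ω'.card + 1 - E.card = Ω'.card - E.card + 1 by omega]
  ring

lemma wt_cyl {α : Type*} [DecidableEq α] (Ω : Finset α) (p : ℝ) (T : Finset α) :
    ∀ (_ : T ⊆ Ω) (g : Finset α → ℝ),
    ∑ E ∈ Ω.powerset, wt Ω p E * (if T ⊆ E then g E else 0)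
      = p ^ T.card * ∑ E ∈ Ω.powerset, wt Ω p E * g (E ∪ T) := by
  induction T using Finset.induction_on with
  | empty => intro _ g; simp
  | insert x T hx ih =>
    intro hT g
    have hxΩ : x ∈ Ω := hT (Finset.mem_insert_self _ _)
    have h1 := wt_cyl_one Ω p x hxΩ (fun E => if T ⊆ E then g E else 0)
    have h2 := ih (fun y hy => hT (Finset.mem_insert_of_mem hy)) (fun E => g (insert x E))
    rw [Finset.card_insert_of_notMem hx, pow_succ']
    calc _ = ∑ E ∈ Ω.powerset, wt Ω p E * (if x ∈ E then (if T ⊆ E then g E else 0) else 0) := by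
            refine Finset.sum_congr rfl fun E _ => ?_
            congr 1
            simp only [Finset.insert_subset_iff]
            split_ifs <;> simp_all
      _ = _ := h1
      _ = p * ∑ E ∈ Ω.powerset, wt Ω p E * (if T ⊆ E then g (insert x E) else 0) := by
            congr 1
            refine Finset.sum_congr rfl fun E _ => ?_
            simp only [Finset.subset_insert_iff_of_notMem hx]
      _ = _ := by
            rw [h2, mul_assoc]
            simp only [Finset.union_insert]

/-- Indicator that no `T i`, `i ∈ S`, is contained in `E`. -/
noncomputable def noT {α ι : Type*} (T : ι → Finset α) (S : Finset ι) (E : Finset α) : ℝ :=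
  if ∀ i ∈ S, ¬ T i ⊆ E then 1 else 0

lemma noT_nonneg {α ι : Type*} (T : ι → Finset α) (S : Finset ι) (E : Finset α) :
    0 ≤ noT T S E := by unfold noT; split_ifs <;> norm_num

lemma noT_anti {α ι : Type*} (T : ι → Finset α) {S S' : Finset ι} (h : S' ⊆ S)
    {E E' : Finset α} (hE : E' ⊆ E) : noT T S E ≤ noT T S' E' := by
  unfold noT
  split_ifs with h1 h2 <;> try norm_num
  exact h2 fun i hi hT => h1 i (h hi) (hT.trans hE)

/-- correlation terms -/
noncomputable def corr {α ι : Type*} [DecidableEq α] (p : ℝ) (T : ι → Finset α) (i j : ι) : ℝ :=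
  if i ≠ j ∧ ¬ Disjoint (T i) (T j) then p ^ (T i ∪ T j).card else 0

lemma corr_nonneg {α ι : Type*} [DecidableEq α] {p : ℝ} (h0 : 0 ≤ p) (T : ι → Finset α) (i j : ι) :
    0 ≤ corr p T i j := by unfold corr; split_ifs <;> positivity

lemma bs_step {α ι : Type*} [DecidableEq α] (Ω : Finset α) {p : ℝ} (h0 : 0 ≤ p)
    (h1 : p ≤ 1) (T : ι → Finset α) (S : Finset ι) (i : ι) (hi : i ∉ S) (hTi : T i ⊆ Ω)
    (hT : ∀ j ∈ S, T j ⊆ Ω) :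
    ∑ E ∈ Ω.powerset, wt Ω p E * noT T (insert i S) E ≤
      (∑ E ∈ Ω.powerset, wt Ω p E * noT T S E) *
        (1 - (p ^ (T i).card - ∑ j ∈ S, corr p T i j)) := by
  set S0 := S.filter (fun j => Disjoint (T i) (T j)) with hS0
  set S1 := S.filter (fun j => ¬ Disjoint (T i) (T j)) with hS1
  have hS0S : S0 ⊆ S := Finset.filter_subset _ _
  -- split
  have key1 : ∀ E, noT T (insert i S) E = noT T S E - (if T i ⊆ E then noT T S E else 0) := by
    intro E
    unfold noT
    simp only [Finset.forall_mem_insert]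
    by_cases h : T i ⊆ E <;> simp [h]
  have key2 : ∀ E, (if T i ⊆ E then noT T S0 E else 0)
      - ∑ j ∈ S1, (if T i ∪ T j ⊆ E then noT T S0 E else 0)
      ≤ (if T i ⊆ E then noT T S E else 0) := by
    intro E
    by_cases h : T i ⊆ E
    · simp only [h, if_true, Finset.union_subset_iff, true_and]
      by_cases h2 : ∃ j ∈ S1, T j ⊆ E
      · obtain ⟨j, hj, hjE⟩ := h2
        have h3 : noT T S0 E ≤ ∑ j ∈ S1, (if T j ⊆ E then noT T S0 E else 0) := by
          calc noT T S0 E = (if T j ⊆ E then noT T S0 E else 0) := by simp [hjE]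
            _ ≤ _ := Finset.single_le_sum (f := fun j => if T j ⊆ E then noT T S0 E else 0)
                (fun j _ => by
                  have := noT_nonneg T S0 E
                  split_ifs <;> simp [this]) hj
        have := noT_nonneg T S E
        linarith
      · push Not at h2
        have h3 : ∑ j ∈ S1, (if T j ⊆ E then noT T S0 E else 0) = 0 :=
          Finset.sum_eq_zero fun j hj => by simp [h2 j hj]
        rw [h3, sub_zero]
        unfold noT
        split_ifs with h4 h5 <;> try norm_num
        refine h5 fun j hj => ?_
        by_cases hd : Disjoint (T i) (T j)
        · exact h4 j (by simp [hS0, hj, hd])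
        · exact h2 j (by simp [hS1, hj, hd])
    · have : ∀ j, ¬ (T i ∪ T j ⊆ E) := fun j hj => h (Finset.union_subset_left hj)
      simp [h, this]
  have P0 : ∑ E ∈ Ω.powerset, wt Ω p E * (if T i ⊆ E then noT T S0 E else 0)
      = p ^ (T i).card * ∑ E ∈ Ω.powerset, wt Ω p E * noT T S0 E := by
    rw [wt_cyl Ω p (T i) hTi (noT T S0)]
    congr 1
    refine Finset.sum_congr rfl fun E _ => ?_
    congr 1
    unfold noT
    congr 1
    refine propext (forall₂_congr fun j hj => not_congr ?_)
    have hd : Disjoint (T i) (T j) := (Finset.mem_filter.1 hj).2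
    constructor
    · intro h x hx
      rcases Finset.mem_union.1 (h hx) with h' | h'
      · exact h'
      · exact absurd hx (Finset.disjoint_left.1 hd h')
    · intro h
      exact h.trans Finset.subset_union_left
  have P1 : ∀ j ∈ S1, ∑ E ∈ Ω.powerset, wt Ω p E * (if T i ∪ T j ⊆ E then noT T S0 E else 0)
      ≤ corr p T i j * ∑ E ∈ Ω.powerset, wt Ω p E * noT T S0 E := by
    intro j hj
    have hj' := Finset.mem_filter.1 hj
    rw [wt_cyl Ω p (T i ∪ T j) (Finset.union_subset hTi (hT j hj'.1)) (noT T S0)]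
    have : corr p T i j = p ^ (T i ∪ T j).card := by
      unfold corr
      rw [if_pos ⟨fun h => hi (h ▸ hj'.1), hj'.2⟩]
    rw [this]
    refine mul_le_mul_of_nonneg_left (Finset.sum_le_sum fun E _ => ?_) (by positivity)
    exact mul_le_mul_of_nonneg_left (noT_anti T (Finset.Subset.refl _) Finset.subset_union_left)
      (wt_nonneg Ω h0 h1 E)
  set Q := ∑ E ∈ Ω.powerset, wt Ω p E * noT T S E with hQ
  set Q0 := ∑ E ∈ Ω.powerset, wt Ω p E * noT T S0 E with hQ0
  set A := ∑ E ∈ Ω.powerset, wt Ω p E * (if T i ⊆ E then noT T S E else 0) with hA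
  have e1 : ∑ E ∈ Ω.powerset, wt Ω p E * noT T (insert i S) E = Q - A := by
    rw [hQ, hA, ← Finset.sum_sub_distrib]
    exact Finset.sum_congr rfl fun E _ => by rw [key1]; ring
  have hA0 : 0 ≤ A := Finset.sum_nonneg fun E _ => mul_nonneg (wt_nonneg Ω h0 h1 E) (by
    have := noT_nonneg T S E
    split_ifs <;> simp [this])
  have hQn : 0 ≤ Q := Finset.sum_nonneg fun E _ =>
    mul_nonneg (wt_nonneg Ω h0 h1 E) (noT_nonneg T S E)
  have hQQ0 : Q ≤ Q0 := Finset.sum_le_sum fun E _ =>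
    mul_le_mul_of_nonneg_left (noT_anti T hS0S (Finset.Subset.refl _)) (wt_nonneg Ω h0 h1 E)
  have hS1c : ∑ j ∈ S1, corr p T i j ≤ ∑ j ∈ S, corr p T i j :=
    Finset.sum_le_sum_of_subset_of_nonneg (Finset.filter_subset _ _)
      (fun j _ _ => corr_nonneg h0 T i j)
  have e2 : Q0 * (p ^ (T i).card - ∑ j ∈ S1, corr p T i j) ≤ A := by
    calc Q0 * (p ^ (T i).card - ∑ j ∈ S1, corr p T i j)
        = p ^ (T i).card * Q0 - ∑ j ∈ S1, corr p T i j * Q0 := by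
          rw [← Finset.sum_mul]; ring
      _ ≤ p ^ (T i).card * Q0 - ∑ j ∈ S1, ∑ E ∈ Ω.powerset,
            wt Ω p E * (if T i ∪ T j ⊆ E then noT T S0 E else 0) :=
          sub_le_sub_left (Finset.sum_le_sum P1) _
      _ = ∑ E ∈ Ω.powerset, wt Ω p E * ((if T i ⊆ E then noT T S0 E else 0)
            - ∑ j ∈ S1, (if T i ∪ T j ⊆ E then noT T S0 E else 0)) := by
          rw [← P0, Finset.sum_comm, ← Finset.sum_sub_distrib]
          refine Finset.sum_congr rfl fun E _ => ?_
          rw [mul_sub, Finset.mul_sum]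
      _ ≤ A := Finset.sum_le_sum fun E _ =>
          mul_le_mul_of_nonneg_left (key2 E) (wt_nonneg Ω h0 h1 E)
  rw [e1]
  set r := p ^ (T i).card - ∑ j ∈ S, corr p T i j with hr
  have hr' : r ≤ p ^ (T i).card - ∑ j ∈ S1, corr p T i j := by rw [hr]; linarith
  have : Q * r ≤ A := by
    by_cases hr0 : 0 ≤ r
    · calc Q * r ≤ Q0 * r := mul_le_mul_of_nonneg_right hQQ0 hr0
        _ ≤ _ := mul_le_mul_of_nonneg_left hr' (hQn.trans hQQ0)
        _ ≤ A := e2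
    · push Not at hr0
      nlinarith
  linarith

lemma bs {α ι : Type*} [DecidableEq α] (Ω : Finset α) {p : ℝ} (h0 : 0 ≤ p)
    (h1 : p ≤ 1) (T : ι → Finset α) (S : Finset ι) :
    (∀ j ∈ S, T j ⊆ Ω) →
    ∑ E ∈ Ω.powerset, wt Ω p E * noT T S E ≤
      Real.exp (-(∑ i ∈ S, p ^ (T i).card - ∑ i ∈ S, ∑ j ∈ S, corr p T i j)) := by
  induction S using Finset.induction_on with
  | empty => intro _; simp [noT, wt_sum]
  | insert i S hi ih =>
    intro hT
    have hT' : ∀ j ∈ S, T j ⊆ Ω := fun j hj => hT j (Finset.mem_insert_of_mem hj)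
    have hs := bs_step Ω h0 h1 T S i hi (hT i (Finset.mem_insert_self _ _)) hT'
    have ih' := ih hT'
    have hQn : 0 ≤ ∑ E ∈ Ω.powerset, wt Ω p E * noT T S E := Finset.sum_nonneg fun E _ =>
      mul_nonneg (wt_nonneg Ω h0 h1 E) (noT_nonneg T S E)
    set r := p ^ (T i).card - ∑ j ∈ S, corr p T i j with hr
    have hexp : 1 - r ≤ Real.exp (-r) := by
      have := Real.add_one_le_exp (-r); linarith
    calc _ ≤ _ := hs
      _ ≤ _ * Real.exp (-r) := mul_le_mul_of_nonneg_left hexp hQn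
      _ ≤ _ * Real.exp (-r) := mul_le_mul_of_nonneg_right ih' (Real.exp_pos _).le
      _ ≤ _ := by
        rw [← Real.exp_add]
        apply Real.exp_le_exp.2
        rw [Finset.sum_insert hi, Finset.sum_insert hi, Finset.sum_insert hi]
        simp only [Finset.sum_insert hi]
        rw [Finset.sum_add_distrib]
        have hd := corr_nonneg h0 T i i
        have hd2 : 0 ≤ ∑ x ∈ S, corr p T x i := Finset.sum_nonneg fun x _ => corr_nonneg h0 T x i
        rw [hr]
        linarith

lemma averaging {ι : Type*} [DecidableEq ι] (I : Finset ι) (f : ι → ℝ) (F : ι → ι → ℝ)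
    (hF : ∀ i, F i i = 0) {q : ℝ} (h0 : 0 ≤ q) (h1 : q ≤ 1) (t : ℝ)
    (h : ∀ S ⊆ I, ∑ i ∈ S, f i - ∑ i ∈ S, ∑ j ∈ S, F i j ≤ t) :
    q * ∑ i ∈ I, f i - q ^ 2 * ∑ i ∈ I, ∑ j ∈ I, F i j ≤ t := by
  have hf : ∀ S ⊆ I, ∑ i ∈ S, f i = ∑ i ∈ I, (if {i} ⊆ S then f i else 0) := by
    intro S hS
    simp only [Finset.singleton_subset_iff]
    rw [← Finset.sum_filter, Finset.filter_mem_eq_inter, Finset.inter_eq_right.2 hS]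
  have hFF : ∀ S ⊆ I, ∑ i ∈ S, ∑ j ∈ S, F i j =
      ∑ i ∈ I, ∑ j ∈ I, (if {i, j} ⊆ S then F i j else 0) := by
    intro S hS
    have : ∀ i j, (if ({i, j} : Finset ι) ⊆ S then F i j else 0)
        = if i ∈ S then (if j ∈ S then F i j else 0) else 0 := by
      intro i j
      by_cases hi : i ∈ S <;> by_cases hj : j ∈ S <;>
        simp [Finset.insert_subset_iff, hi, hj]
    simp only [this]
    have h2 : ∀ i, ∑ j ∈ I, (if i ∈ S then (if j ∈ S then F i j else 0) else 0)
        = if i ∈ S then ∑ j ∈ S, F i j else 0 := by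
      intro i
      by_cases hi : i ∈ S
      · simp only [hi, if_true]
        rw [← Finset.sum_filter, Finset.filter_mem_eq_inter, Finset.inter_eq_right.2 hS]
      · simp [hi]
    simp only [h2]
    rw [← Finset.sum_filter, Finset.filter_mem_eq_inter, Finset.inter_eq_right.2 hS]
  have e1 : ∀ T ⊆ I, ∀ c : ℝ, ∑ S ∈ I.powerset, wt I q S * (if T ⊆ S then c else 0)
      = q ^ T.card * c := by
    intro T hT c
    rw [wt_cyl I q T hT (fun _ => c), ← Finset.sum_mul, wt_sum, one_mul]
  have main : ∑ S ∈ I.powerset, wt I q S * (∑ i ∈ S, f i - ∑ i ∈ S, ∑ j ∈ S, F i j)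
      = q * ∑ i ∈ I, f i - q ^ 2 * ∑ i ∈ I, ∑ j ∈ I, F i j := by
    have : ∀ S ∈ I.powerset, wt I q S * (∑ i ∈ S, f i - ∑ i ∈ S, ∑ j ∈ S, F i j)
        = ∑ i ∈ I, wt I q S * (if {i} ⊆ S then f i else 0)
          - ∑ i ∈ I, ∑ j ∈ I, wt I q S * (if {i, j} ⊆ S then F i j else 0) := by
      intro S hS
      have hS' := Finset.mem_powerset.1 hS
      rw [hf S hS', hFF S hS', mul_sub, Finset.mul_sum, Finset.mul_sum]
      simp only [Finset.mul_sum]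
    rw [Finset.sum_congr rfl this, Finset.sum_sub_distrib, Finset.sum_comm,
      Finset.sum_comm (s := I.powerset), Finset.mul_sum, Finset.mul_sum]
    congr 1
    · refine Finset.sum_congr rfl fun i hi => ?_
      rw [e1 {i} (by simpa using hi)]; simp
    · refine Finset.sum_congr rfl fun i hi => ?_
      rw [Finset.sum_comm, Finset.mul_sum]
      refine Finset.sum_congr rfl fun j hj => ?_
      rw [e1 {i, j} (by simp [Finset.insert_subset_iff, hi, hj])]
      by_cases hij : i = j
      · subst hij; simp [hF]
      · rw [Finset.card_pair hij]
  rw [← main]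
  calc _ ≤ ∑ S ∈ I.powerset, wt I q S * t := Finset.sum_le_sum fun S hS =>
        mul_le_mul_of_nonneg_left (h S (Finset.mem_powerset.1 hS)) (wt_nonneg I h0 h1 S)
    _ = t := by rw [← Finset.sum_mul, wt_sum, one_mul]

/-- A Janson-type inequality. -/
lemma janson {α ι : Type*} [DecidableEq α] [DecidableEq ι] (Ω : Finset α) {p : ℝ} (h0 : 0 ≤ p)
    (h1 : p ≤ 1) (T : ι → Finset α) (I : Finset ι) (hT : ∀ j ∈ I, T j ⊆ Ω)
    {q : ℝ} (hq0 : 0 ≤ q) (hq1 : q ≤ 1) :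
    ∑ E ∈ Ω.powerset, wt Ω p E * noT T I E ≤
      Real.exp (-(q * ∑ i ∈ I, p ^ (T i).card - q ^ 2 * ∑ i ∈ I, ∑ j ∈ I, corr p T i j)) := by
  set P := ∑ E ∈ Ω.powerset, wt Ω p E * noT T I E with hP
  have hP0 : 0 ≤ P := Finset.sum_nonneg fun E _ =>
    mul_nonneg (wt_nonneg Ω h0 h1 E) (noT_nonneg T I E)
  rcases hP0.eq_or_lt with h | hpos
  · rw [← h]; exact (Real.exp_pos _).le
  · have := averaging I (fun i => p ^ (T i).card) (corr p T) (fun i => by simp [corr]) hq0 hq1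
      (-Real.log P) (by
        intro S hS
        have hb := bs Ω h0 h1 T S (fun j hj => hT j (hS hj))
        have hPS : P ≤ ∑ E ∈ Ω.powerset, wt Ω p E * noT T S E := Finset.sum_le_sum fun E _ =>
          mul_le_mul_of_nonneg_left (noT_anti T hS (Finset.Subset.refl _)) (wt_nonneg Ω h0 h1 E)
        have := Real.log_le_log hpos (hPS.trans hb)
        rw [Real.log_exp] at this
        linarith)
    rw [← Real.exp_log hpos]
    apply Real.exp_le_exp.2
    linarith

lemma mem_edgeIdx {k d i m : ℕ} : m ∈ edgeIdx k d 0 i ↔ i * d ≤ m ∧ m < i * d + k := by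
  unfold edgeIdx
  simp only [Finset.mem_image, Finset.mem_range, zero_add]
  constructor
  · rintro ⟨j, hj, rfl⟩; omega
  · rintro ⟨h1, h2⟩; exact ⟨m - i * d, by omega, by omega⟩

/-- positions of the `i`-th edge -/
noncomputable def pset (k d b i : ℕ) : Finset (Fin b) :=
  Finset.univ.filter (fun m : Fin b => (m : ℕ) ∈ edgeIdx k d 0 i)

/-- the edge set of the path spanned by `w` -/
noncomputable def Tset {n b : ℕ} (k d a : ℕ) (w : Fin b → Fin n) : Finset (Finset (Fin n)) :=
  (Finset.range a).image (fun i => (pset k d b i).image w)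

lemma edgeIdx_card (k d i : ℕ) : (edgeIdx k d 0 i).card = k := by
  unfold edgeIdx
  rw [Finset.card_image_of_injective _ (fun x y h => by simpa using h), Finset.card_range]

lemma edge_lt {k d ℓ a i : ℕ} (hk : k = d + ℓ) (hi : i < a) : i * d + k ≤ a * d + ℓ := by
  have : (i + 1) * d ≤ a * d := Nat.mul_le_mul_right _ hi
  rw [Nat.add_mul] at this
  omega

lemma pset_card {k d ℓ a i : ℕ} (hk : k = d + ℓ) (hi : i < a) :
    (pset k d (a * d + ℓ) i).card = k := by
  have := edge_lt hk hi
  rw [← Finset.card_map Fin.valEmbedding]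
  refine Eq.trans (congrArg Finset.card ?_) (edgeIdx_card k d i)
  ext x
  simp only [pset, Finset.mem_map, Finset.mem_filter, Finset.mem_univ, true_and,
    Fin.valEmbedding_apply]
  constructor
  · rintro ⟨m, hm, rfl⟩; exact hm
  · intro hx
    have h2 := (mem_edgeIdx.1 hx).2
    exact ⟨⟨x, by omega⟩, hx, rfl⟩

lemma union_card {k d ℓ : ℕ} (hk : k = d + ℓ) (J : Finset ℕ) :
    J.Nonempty → J.card * d + ℓ ≤ (J.biUnion (edgeIdx k d 0)).card := by
  induction J using Finset.induction_on_max with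
  | empty => intro h; simp at h
  | insert i J hi ih =>
    intro _
    have hiJ : i ∉ J := fun h => lt_irrefl _ (hi i h)
    rw [Finset.card_insert_of_notMem hiJ, Finset.biUnion_insert]
    rcases J.eq_empty_or_nonempty with rfl | hne
    · simp [edgeIdx_card, hk]
    · have ih' := ih hne
      have hdis : Disjoint (Finset.Ico (i * d + ℓ) (i * d + k)) (J.biUnion (edgeIdx k d 0)) := by
        rw [Finset.disjoint_left]
        intro x hx hx'
        obtain ⟨j, hj, hxj⟩ := Finset.mem_biUnion.1 hx'
        have h1 := Finset.mem_Ico.1 hx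
        have h2 := mem_edgeIdx.1 hxj
        have h3 := edge_lt hk (hi j hj)
        omega
      have hsub : Finset.Ico (i * d + ℓ) (i * d + k) ∪ J.biUnion (edgeIdx k d 0) ⊆
          edgeIdx k d 0 i ∪ J.biUnion (edgeIdx k d 0) := by
        refine Finset.union_subset_union_left fun x hx => ?_
        have h1 := Finset.mem_Ico.1 hx
        exact mem_edgeIdx.2 ⟨by omega, by omega⟩
      have := Finset.card_le_card hsub
      rw [Finset.card_union_of_disjoint hdis, Nat.card_Ico] at this
      rw [Nat.add_mul]
      omega

lemma Tset_card {n k d ℓ a : ℕ} (hk : k = d + ℓ) (hd : 1 ≤ d)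
    (w : Fin (a * d + ℓ) → Fin n) (hw : Function.Injective w) : (Tset k d a w).card = a := by
  unfold Tset
  rw [Finset.card_image_of_injOn, Finset.card_range]
  have key : ∀ i < a, ∀ j < a, pset k d (a * d + ℓ) i = pset k d (a * d + ℓ) j → j ≤ i := by
    intro i hi j hj h
    have := edge_lt hk hi
    have h1 : (⟨i * d, by omega⟩ : Fin (a * d + ℓ)) ∈ pset k d (a * d + ℓ) i := by
      simp only [pset, Finset.mem_filter, Finset.mem_univ, true_and]
      exact mem_edgeIdx.2 ⟨le_rfl, by omega⟩
    rw [h] at h1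
    simp only [pset, Finset.mem_filter, Finset.mem_univ, true_and] at h1
    exact Nat.le_of_mul_le_mul_right (mem_edgeIdx.1 h1).1 hd
  intro i hi j hj h
  have hi' := Finset.mem_range.1 hi
  have hj' := Finset.mem_range.1 hj
  have h' := Finset.image_injective hw h
  exact le_antisymm (key j hj' i hi' h'.symm) (key i hi' j hj' h')

lemma Tset_subset {n k d ℓ a : ℕ} (hk : k = d + ℓ)
    (w : Fin (a * d + ℓ) → Fin n) (hw : Function.Injective w) : Tset k d a w ⊆ kSets n k := by
  intro e he
  obtain ⟨i, hi, rfl⟩ := Finset.mem_image.1 he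
  rw [kSets, Finset.mem_powersetCard]
  exact ⟨Finset.subset_univ _, by
    rw [Finset.card_image_of_injective _ hw, pset_card hk (Finset.mem_range.1 hi)]⟩

/-- number of positions of `w'` in a set -/
noncomputable def npos {n b : ℕ} (S : Finset (Fin n)) (w' : Fin b → Fin n) : ℕ :=
  (Finset.univ.filter (fun m : Fin b => w' m ∈ S)).card

lemma npos_lower {n k d ℓ a : ℕ} (hk : k = d + ℓ) (w w' : Fin (a * d + ℓ) → Fin n)
    (he : ¬ Disjoint (Tset k d a w) (Tset k d a w')) :
    (Tset k d a w ∩ Tset k d a w').card * d + ℓ ≤ npos (Finset.univ.image w) w' := by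
  set J := (Finset.range a).filter
    (fun i => (pset k d (a * d + ℓ) i).image w' ∈ Tset k d a w) with hJ
  have h1 : Tset k d a w ∩ Tset k d a w' ⊆
      J.image (fun i => (pset k d (a * d + ℓ) i).image w') := by
    intro e he
    obtain ⟨h, h'⟩ := Finset.mem_inter.1 he
    obtain ⟨i, hi, rfl⟩ := Finset.mem_image.1 h'
    exact Finset.mem_image.2 ⟨i, Finset.mem_filter.2 ⟨hi, h⟩, rfl⟩
  have h2 : (Tset k d a w ∩ Tset k d a w').card ≤ J.card :=
    (Finset.card_le_card h1).trans Finset.card_image_le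
  have h3 : (Tset k d a w ∩ Tset k d a w').Nonempty := by
    rwa [← Finset.not_disjoint_iff_nonempty_inter]
  have hJn : J.Nonempty := by
    have := h3.card_pos
    exact Finset.card_pos.1 (by omega)
  have h4 := union_card hk J hJn
  have h5 : (J.biUnion (edgeIdx k d 0)).card ≤ npos (Finset.univ.image w) w' := by
    unfold npos
    rw [← Finset.card_map Fin.valEmbedding]
    apply Finset.card_le_card
    intro x hx
    obtain ⟨i, hi, hxi⟩ := Finset.mem_biUnion.1 hx
    obtain ⟨hia, hiT⟩ := Finset.mem_filter.1 hi
    have hb := edge_lt hk (Finset.mem_range.1 hia)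
    have hx2 := (mem_edgeIdx.1 hxi).2
    have hxb : x < a * d + ℓ := by omega
    refine Finset.mem_map.2 ⟨⟨x, hxb⟩, ?_, rfl⟩
    simp only [Finset.mem_filter, Finset.mem_univ, true_and]
    obtain ⟨i0, _, h0⟩ := Finset.mem_image.1 hiT
    have : w' ⟨x, hxb⟩ ∈ (pset k d (a * d + ℓ) i).image w' :=
      Finset.mem_image_of_mem _ (by simpa [pset] using hxi)
    rw [← h0] at this
    exact Finset.image_subset_image (Finset.subset_univ _) this
  have := Nat.mul_le_mul_right d h2
  omega

lemma count_npos {n b v : ℕ} (hb : 1 ≤ b) (hv : v ≤ b) (S : Finset (Fin n)) (hS : S.card ≤ b) :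
    ((Finset.univ : Finset (Fin b → Fin n)).filter (fun w' => v ≤ npos S w')).card
      ≤ 2 ^ b * b ^ b * n ^ (b - v) := by
  have hsub : (Finset.univ : Finset (Fin b → Fin n)).filter (fun w' => v ≤ npos S w') ⊆
      ((Finset.univ : Finset (Fin b)).powersetCard v).biUnion
        (fun P => Fintype.piFinset (fun m => if m ∈ P then S else Finset.univ)) := by
    intro w' hw'
    have h := (Finset.mem_filter.1 hw').2
    obtain ⟨P, hP, hPc⟩ := Finset.exists_subset_card_eq h
    refine Finset.mem_biUnion.2 ⟨P, Finset.mem_powersetCard.2 ⟨Finset.subset_univ _, hPc⟩, ?_⟩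
    rw [Fintype.mem_piFinset]
    intro m
    by_cases hm : m ∈ P
    · simpa [hm] using (Finset.mem_filter.1 (hP hm)).2
    · simp [hm]
  refine (Finset.card_le_card hsub).trans (Finset.card_biUnion_le.trans ?_)
  have hone : ∀ P ∈ (Finset.univ : Finset (Fin b)).powersetCard v,
      (Fintype.piFinset (fun m => if m ∈ P then S else (Finset.univ : Finset (Fin n)))).card
        ≤ b ^ b * n ^ (b - v) := by
    intro P hP
    have hPc := (Finset.mem_powersetCard.1 hP).2
    rw [Fintype.card_piFinset]
    have : ∀ m, (if m ∈ P then S else (Finset.univ : Finset (Fin n))).card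
        = if m ∈ P then S.card else n := by
      intro m; split_ifs <;> simp
    simp only [this]
    rw [Finset.prod_ite, Finset.prod_const, Finset.prod_const]
    have e1 : (Finset.univ.filter (fun m => m ∈ P)).card = v := by simp [hPc]
    have e2 : (Finset.univ.filter (fun m => m ∉ P)).card = b - v := by
      rw [← hPc, ← Finset.compl_filter, Finset.card_compl]; simp
    rw [e1, e2]
    refine Nat.mul_le_mul_right _ ((Nat.pow_le_pow_left hS v).trans ?_)
    exact Nat.pow_le_pow_right hb hv
  refine (Finset.sum_le_card_nsmul _ _ _ hone).trans ?_
  rw [Finset.card_powersetCard, Finset.card_univ, Fintype.card_fin, smul_eq_mul, mul_assoc]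
  exact Nat.mul_le_mul_right _ (Nat.choose_le_two_pow b v)

lemma count_noninj {n b : ℕ} :
    ((Finset.univ : Finset (Fin b → Fin n)).filter (fun w => ¬ Function.Injective w)).card
      ≤ b ^ 2 * n ^ (b - 1) := by
  have hsub : (Finset.univ : Finset (Fin b → Fin n)).filter (fun w => ¬ Function.Injective w) ⊆
      ((Finset.univ : Finset (Fin b × Fin b)).filter (fun x => x.1 ≠ x.2)).biUnion
        (fun x => Finset.univ.filter (fun w => w x.1 = w x.2)) := by
    intro w hw
    have h := (Finset.mem_filter.1 hw).2
    unfold Function.Injective at h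
    push Not at h
    obtain ⟨i, j, hij, hne⟩ := h
    exact Finset.mem_biUnion.2 ⟨(i, j), by simpa using hne, by simpa using hij⟩
  refine (Finset.card_le_card hsub).trans (Finset.card_biUnion_le.trans ?_)
  have hone : ∀ x ∈ (Finset.univ : Finset (Fin b × Fin b)).filter (fun x => x.1 ≠ x.2),
      ((Finset.univ : Finset (Fin b → Fin n)).filter (fun w => w x.1 = w x.2)).card
        ≤ n ^ (b - 1) := by
    rintro ⟨i, j⟩ hx
    have hne : i ≠ j := by simpa using hx
    have hc : (Finset.univ : Finset ({m : Fin b // m ≠ j} → Fin n)).card = n ^ (b - 1) := by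
      rw [Finset.card_univ, Fintype.card_fun]
      simp [Fintype.card_subtype_compl]
    rw [← hc]
    refine Finset.card_le_card_of_injOn (fun w m => w m.1) (fun _ _ => Finset.mem_coe.2 (Finset.mem_univ _)) ?_
    intro w hw w' hw' h
    have h1 : w i = w j := by simpa using hw
    have h2 : w' i = w' j := by simpa using hw'
    have h3 : ∀ m, m ≠ j → w m = w' m := fun m hm => congrFun h ⟨m, hm⟩
    funext m
    by_cases hm : m = j
    · subst hm; rw [← h1, ← h2]; exact h3 i hne
    · exact h3 m hm
  refine (Finset.sum_le_card_nsmul _ _ _ hone).trans ?_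
  rw [smul_eq_mul]
  refine Nat.mul_le_mul_right _ ((Finset.card_filter_le _ _).trans ?_)
  rw [Finset.card_univ, Fintype.card_prod, Fintype.card_fin, sq]

lemma count_cand {n b ℓ : ℕ} (hl : 1 ≤ ℓ) (hb : 2 * ℓ ≤ b) (F : Finset (Finset (Fin n)))
    (hF : ∀ S ∈ F, S.card = ℓ) (Vs : Finset (Fin n)) :
    F.card ^ 2 * Vs.card ^ (b - 2 * ℓ) ≤
      ((Finset.univ : Finset (Fin b → Fin n)).filter (fun w => firstEnd ℓ w ∈ F ∧
        lastEnd ℓ w ∈ F ∧ ∀ m : Fin b, ℓ ≤ (m : ℕ) → (m : ℕ) < b - ℓ → w m ∈ Vs)).card := by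
  rcases F.eq_empty_or_nonempty with rfl | ⟨S₀, hS₀⟩
  · simp
  have hex : ∀ S : Finset (Fin n), ∃ f : ℕ → Fin n,
      S ∈ F → (Finset.range ℓ).image f = S := by
    intro S
    have hne : S₀.Nonempty := Finset.card_pos.1 (by rw [hF S₀ hS₀]; omega)
    by_cases hS : S ∈ F
    · refine ⟨fun m => if h : m < ℓ then S.orderEmbOfFin (hF S hS) ⟨m, h⟩ else hne.choose, ?_⟩
      intro _
      ext x
      simp only [Finset.mem_image, Finset.mem_range]
      constructor
      · rintro ⟨m, hm, rfl⟩
        simp [hm]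
      · intro hx
        have : x ∈ Set.range (S.orderEmbOfFin (hF S hS)) := by
          rw [Finset.range_orderEmbOfFin]; exact hx
        obtain ⟨m, rfl⟩ := this
        exact ⟨m, m.2, by simp⟩
    · exact ⟨fun _ => hne.choose, fun h => absurd h hS⟩
  choose en hen using hex
  let Φ : Finset (Fin n) × Finset (Fin n) × (Fin (b - 2 * ℓ) → Fin n) → (Fin b → Fin n) :=
    fun x m => if h : (m : ℕ) < ℓ then en x.1 m
      else if h2 : (m : ℕ) < b - ℓ then x.2.2 ⟨(m : ℕ) - ℓ, by omega⟩
      else en x.2.1 ((m : ℕ) - (b - ℓ))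
  have hfirst : ∀ x, x.1 ∈ F → firstEnd ℓ (Φ x) = x.1 := by
    intro x hx
    rw [← hen x.1 hx]
    ext y
    simp only [firstEnd, Finset.mem_image, Finset.mem_filter, Finset.mem_univ, true_and,
      Finset.mem_range]
    constructor
    · rintro ⟨m, hm, rfl⟩
      exact ⟨m, hm, by simp [Φ, hm]⟩
    · rintro ⟨m, hm, rfl⟩
      exact ⟨⟨m, by omega⟩, hm, by simp [Φ, hm]⟩
  have hlast : ∀ x, x.2.1 ∈ F → lastEnd ℓ (Φ x) = x.2.1 := by
    intro x hx
    conv_rhs => rw [← hen x.2.1 hx]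
    ext y
    simp only [lastEnd, Finset.mem_image, Finset.mem_filter, Finset.mem_univ, true_and,
      Finset.mem_range]
    constructor
    · rintro ⟨m, hm, rfl⟩
      have h1 : ¬ ((m : ℕ) < ℓ) := by omega
      have h2 : ¬ ((m : ℕ) < b - ℓ) := by omega
      have := m.2
      exact ⟨m - (b - ℓ), by omega, by simp [Φ, h1, h2]⟩
    · rintro ⟨m, hm, rfl⟩
      have h1 : ¬ (m + (b - ℓ) < ℓ) := by omega
      have h2 : ¬ (m + (b - ℓ) < b - ℓ) := by omega
      exact ⟨⟨m + (b - ℓ), by omega⟩, by simp, by simp [Φ, h1]⟩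
  have hcard : (F ×ˢ F ×ˢ Fintype.piFinset (fun _ : Fin (b - 2 * ℓ) => Vs)).card
      = F.card ^ 2 * Vs.card ^ (b - 2 * ℓ) := by
    rw [Finset.card_product, Finset.card_product, Fintype.card_piFinset, Finset.prod_const,
      Finset.card_univ, Fintype.card_fin]
    ring
  rw [← hcard]
  refine Finset.card_le_card_of_injOn Φ ?_ ?_
  · intro x hx
    obtain ⟨hx1, hx2, hx3⟩ : x.1 ∈ F ∧ x.2.1 ∈ F ∧ ∀ m, x.2.2 m ∈ Vs := by
      simpa [Finset.mem_product, Fintype.mem_piFinset] using hx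
    simp only [Finset.coe_filter, Finset.mem_univ, true_and, Set.mem_ofPred_eq]
    refine ⟨by rw [hfirst x hx1]; exact hx1, by rw [hlast x hx2]; exact hx2, ?_⟩
    intro m h1 h2
    have h1' : ¬ ((m : ℕ) < ℓ) := by omega
    simp only [Φ, h1', h2, dif_neg, dif_pos, not_false_eq_true]
    exact hx3 _
  · intro x hx y hy h
    obtain ⟨hx1, hx2, hx3⟩ : x.1 ∈ F ∧ x.2.1 ∈ F ∧ ∀ m, x.2.2 m ∈ Vs := by
      simpa [Finset.mem_product, Fintype.mem_piFinset] using hx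
    obtain ⟨hy1, hy2, hy3⟩ : y.1 ∈ F ∧ y.2.1 ∈ F ∧ ∀ m, y.2.2 m ∈ Vs := by
      simpa [Finset.mem_product, Fintype.mem_piFinset] using hy
    have e1 : x.1 = y.1 := by rw [← hfirst x hx1, ← hfirst y hy1, h]
    have e2 : x.2.1 = y.2.1 := by rw [← hlast x hx2, ← hlast y hy2, h]
    have e3 : x.2.2 = y.2.2 := by
      funext m
      have hm := m.2
      have := congrFun h ⟨m + ℓ, by omega⟩
      have h2 : (m : ℕ) + ℓ < b - ℓ := by omega
      simpa [Φ, h2] using this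
    exact Prod.ext e1 (Prod.ext e2 e3)

/-- the candidate tuples -/
noncomputable def cand {n : ℕ} (ℓ b : ℕ) (F : Finset (Finset (Fin n))) (Vs : Finset (Fin n)) :
    Finset (Fin b → Fin n) :=
  Finset.univ.filter (fun w => Function.Injective w ∧ firstEnd ℓ w ∈ F ∧
        lastEnd ℓ w ∈ F ∧ ∀ m : Fin b, ℓ ≤ (m : ℕ) → (m : ℕ) < b - ℓ → w m ∈ Vs)

lemma cand_card {n b ℓ : ℕ} (hl : 1 ≤ ℓ) (hb : 2 * ℓ ≤ b) (F : Finset (Finset (Fin n)))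
    (hF : ∀ S ∈ F, S.card = ℓ) (Vs : Finset (Fin n)) :
    F.card ^ 2 * Vs.card ^ (b - 2 * ℓ) ≤ (cand ℓ b F Vs).card + b ^ 2 * n ^ (b - 1) := by
  refine (count_cand hl hb F hF Vs).trans ?_
  refine le_trans (Finset.card_le_card (t := cand ℓ b F Vs ∪
    (Finset.univ : Finset (Fin b → Fin n)).filter (fun w => ¬ Function.Injective w)) ?_) ?_
  · intro w hw
    have hw' := (Finset.mem_filter.1 hw).2
    by_cases hi : Function.Injective w
    · exact Finset.mem_union_left _ (Finset.mem_filter.2 ⟨Finset.mem_univ _, hi, hw'⟩)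
    · exact Finset.mem_union_right _ (Finset.mem_filter.2 ⟨Finset.mem_univ _, hi⟩)
  · exact (Finset.card_union_le _ _).trans (Nat.add_le_add_left count_noninj _)

/-- lower bound for the number of candidates -/
lemma cand_lower {n b ℓ : ℕ} (hl : 1 ≤ ℓ) (hb : 2 * ℓ ≤ b) (F : Finset (Finset (Fin n)))
    (hF : ∀ S ∈ F, S.card = ℓ) (Vs : Finset (Fin n)) {γ : ℝ} (hγ : 0 < γ)
    (hVs : γ * (n : ℝ) ≤ (Vs.card : ℝ)) (hFc : γ * (n : ℝ) ^ ℓ ≤ (F.card : ℝ))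
    (hn : 2 * (b : ℝ) ^ 2 ≤ γ ^ (b - 2 * ℓ + 2) * n) :
    γ ^ (b - 2 * ℓ + 2) / 2 * (n : ℝ) ^ b ≤ ((cand ℓ b F Vs).card : ℝ) := by
  have h := cand_card hl hb F hF Vs
  have h' : (F.card : ℝ) ^ 2 * (Vs.card : ℝ) ^ (b - 2 * ℓ) ≤
      ((cand ℓ b F Vs).card : ℝ) + (b : ℝ) ^ 2 * (n : ℝ) ^ (b - 1) := by exact_mod_cast h
  have h1 : (γ * (n : ℝ) ^ ℓ) ^ 2 * (γ * (n : ℝ)) ^ (b - 2 * ℓ) ≤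
      (F.card : ℝ) ^ 2 * (Vs.card : ℝ) ^ (b - 2 * ℓ) := by gcongr
  have h2 : (γ * (n : ℝ) ^ ℓ) ^ 2 * (γ * (n : ℝ)) ^ (b - 2 * ℓ)
      = γ ^ (b - 2 * ℓ + 2) * (n : ℝ) ^ b := by
    have : (n : ℝ) ^ b = (n : ℝ) ^ (ℓ * 2 + (b - 2 * ℓ)) := by congr 1; omega
    rw [this, mul_pow, mul_pow, ← pow_mul, pow_add, pow_add]
    ring
  have h3 : (n : ℝ) ^ b = (n : ℝ) * (n : ℝ) ^ (b - 1) := by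
    rw [← pow_succ']; congr 1; omega
  have h4 : 2 * (b : ℝ) ^ 2 * (n : ℝ) ^ (b - 1) ≤ γ ^ (b - 2 * ℓ + 2) * n * (n : ℝ) ^ (b - 1) := by
    gcongr
  rw [h2] at h1
  rw [h3] at h1 ⊢
  nlinarith

lemma corr_row {n k d ℓ a : ℕ} (hk : k = d + ℓ) (hd : 1 ≤ d) (hl : 1 ≤ ℓ) {p M : ℝ}
    (hp : 0 < p) (hM0 : 0 < M)
    (hM : ∀ e, 1 ≤ e → e ≤ a → M ≤ (n : ℝ) ^ (e * d + ℓ) * p ^ e)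
    (I : Finset (Fin (a * d + ℓ) → Fin n)) (hI : ∀ w ∈ I, Function.Injective w)
    (w : Fin (a * d + ℓ) → Fin n) (hw : Function.Injective w) :
    ∑ w' ∈ I, corr p (Tset k d a) w w' ≤
      a * (((2 ^ (a * d + ℓ) * (a * d + ℓ) ^ (a * d + ℓ) : ℕ) : ℝ) *
        ((n : ℝ) ^ (a * d + ℓ) * p ^ (2 * a) / M)) := by
  set K := 2 ^ (a * d + ℓ) * (a * d + ℓ) ^ (a * d + ℓ) with hK
  set S := Finset.univ.image w with hS
  have hSb : S.card ≤ (a * d + ℓ) := by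
    refine Finset.card_image_le.trans ?_
    simp
  have hpt : ∀ w' ∈ I, corr p (Tset k d a) w w' ≤
      ∑ e ∈ Finset.Icc 1 a, (if e * d + ℓ ≤ npos S w' then p ^ (2 * a - e) else 0) := by
    intro w' hw'
    have hnn : ∀ e ∈ Finset.Icc 1 a,
        0 ≤ (if e * d + ℓ ≤ npos S w' then p ^ (2 * a - e) else 0) := by
      intro e _; split_ifs <;> positivity
    unfold corr
    split_ifs with h
    · have hpos := npos_lower hk w w' h.2
      have hne := (Finset.not_disjoint_iff_nonempty_inter.1 h.2).card_pos
      have hcu := Finset.card_union_add_card_inter (Tset k d a w) (Tset k d a w')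
      have hci := Finset.card_le_card
        (Finset.inter_subset_left (s₁ := Tset k d a w) (s₂ := Tset k d a w'))
      rw [Tset_card hk hd w hw] at hcu hci
      rw [Tset_card hk hd w' (hI w' hw')] at hcu
      set e := (Tset k d a w ∩ Tset k d a w').card with he
      have hmem : e ∈ Finset.Icc 1 a := Finset.mem_Icc.2 ⟨hne, hci⟩
      refine le_trans ?_ (Finset.single_le_sum hnn hmem)
      rw [if_pos hpos, show (Tset k d a w ∪ Tset k d a w').card = 2 * a - e by omega]
    · exact Finset.sum_nonneg hnn
  have hcol : ∀ e ∈ Finset.Icc 1 a,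
      ∑ w' ∈ I, (if e * d + ℓ ≤ npos S w' then p ^ (2 * a - e) else 0) ≤
      (K : ℝ) * ((n : ℝ) ^ (a * d + ℓ) * p ^ (2 * a) / M) := by
    intro e he
    obtain ⟨he1, hea⟩ := Finset.mem_Icc.1 he
    have hv : e * d + ℓ ≤ (a * d + ℓ) := by
      have := Nat.mul_le_mul_right d hea
      omega
    have hc := count_npos (n := n) (by omega) hv S hSb
    calc ∑ w' ∈ I, (if e * d + ℓ ≤ npos S w' then p ^ (2 * a - e) else 0)
        ≤ ∑ w' : Fin (a * d + ℓ) → Fin n, (if e * d + ℓ ≤ npos S w' then p ^ (2 * a - e) else 0) :=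
          Finset.sum_le_sum_of_subset_of_nonneg (Finset.subset_univ _) (fun w' _ _ => by
            split_ifs <;> positivity)
      _ = (((Finset.univ : Finset (Fin (a * d + ℓ) → Fin n)).filter
            (fun w' => e * d + ℓ ≤ npos S w')).card : ℝ) * p ^ (2 * a - e) := by
          rw [← Finset.sum_filter, Finset.sum_const, nsmul_eq_mul]
      _ ≤ ((K * n ^ ((a * d + ℓ) - (e * d + ℓ)) : ℕ) : ℝ) * p ^ (2 * a - e) := by
          gcongr
      _ = (K : ℝ) * ((n : ℝ) ^ ((a * d + ℓ) - (e * d + ℓ)) * p ^ (2 * a - e)) := by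
          push_cast; ring
      _ ≤ _ := by
          refine mul_le_mul_of_nonneg_left ?_ (Nat.cast_nonneg _)
          rw [le_div_iff₀ hM0]
          calc (n : ℝ) ^ ((a * d + ℓ) - (e * d + ℓ)) * p ^ (2 * a - e) * M
              ≤ (n : ℝ) ^ ((a * d + ℓ) - (e * d + ℓ)) * p ^ (2 * a - e) *
                ((n : ℝ) ^ (e * d + ℓ) * p ^ e) :=
                mul_le_mul_of_nonneg_left (hM e he1 hea) (by positivity)
            _ = ((n : ℝ) ^ ((a * d + ℓ) - (e * d + ℓ)) * (n : ℝ) ^ (e * d + ℓ)) *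
                (p ^ (2 * a - e) * p ^ e) := by ring
            _ = _ := by
              rw [← pow_add, ← pow_add, Nat.sub_add_cancel hv, Nat.sub_add_cancel (by omega)]
  calc _ ≤ ∑ w' ∈ I, ∑ e ∈ Finset.Icc 1 a,
        (if e * d + ℓ ≤ npos S w' then p ^ (2 * a - e) else 0) := Finset.sum_le_sum hpt
    _ = ∑ e ∈ Finset.Icc 1 a, ∑ w' ∈ I,
        (if e * d + ℓ ≤ npos S w' then p ^ (2 * a - e) else 0) := Finset.sum_comm
    _ ≤ _ := Finset.sum_le_card_nsmul _ _ _ hcol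
    _ = _ := by rw [Nat.card_Icc, nsmul_eq_mul]; simp

lemma main_bound {n k d ℓ a : ℕ} (hk : k = d + ℓ) (hd : 1 ≤ d) (hl : 1 ≤ ℓ) (ha : 1 ≤ a)
    {p M c : ℝ}
    (hn : 1 ≤ n) (hp : 0 < p) (hp1 : p ≤ 1) (hM0 : 0 < M)
    (hM : ∀ e, 1 ≤ e → e ≤ a → M ≤ (n : ℝ) ^ (e * d + ℓ) * p ^ e)
    (I : Finset (Fin (a * d + ℓ) → Fin n)) (hI : ∀ w ∈ I, Function.Injective w)
    (hc : c * (n : ℝ) ^ (a * d + ℓ) ≤ (I.card : ℝ)) :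
    ∑ E ∈ (kSets n k).powerset, wt (kSets n k) p E * noT (Tset k d a) I E ≤
      Real.exp (-(c * M /
        (4 * a * ((2 ^ (a * d + ℓ) * (a * d + ℓ) ^ (a * d + ℓ) : ℕ) : ℝ)))) := by
  have hrow := fun w (hw : w ∈ I) => corr_row hk hd hl hp hM0 hM I hI w (hI w hw)
  set K : ℝ := ((2 ^ (a * d + ℓ) * (a * d + ℓ) ^ (a * d + ℓ) : ℕ) : ℝ) with hK
  have hb1 : 1 ≤ a * d + ℓ := by omega
  have hK1 : 1 ≤ K := by
    rw [hK]
    exact_mod_cast Nat.mul_pos (by positivity) (Nat.pow_pos hb1)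
  have ha' : (1 : ℝ) ≤ a := by exact_mod_cast ha
  have hn' : (0 : ℝ) < n := by exact_mod_cast hn
  have hY : M ≤ (n : ℝ) ^ (a * d + ℓ) * p ^ a := hM a ha le_rfl
  set N : ℝ := (I.card : ℝ) with hN
  set q : ℝ := M / (2 * a * K * ((n : ℝ) ^ (a * d + ℓ) * p ^ a)) with hq
  have hYpos : 0 < (n : ℝ) ^ (a * d + ℓ) * p ^ a := by positivity
  have haK : 1 ≤ a * K := by nlinarith
  have hq0 : 0 ≤ q := by positivity
  have hq1 : q ≤ 1 := by
    rw [hq, div_le_one (by positivity)]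
    nlinarith
  refine (janson (kSets n k) hp.le hp1 (Tset k d a) I
    (fun w hw => Tset_subset hk w (hI w hw)) hq0 hq1).trans ?_
  apply Real.exp_le_exp.2
  apply neg_le_neg
  have hsum1 : ∑ w ∈ I, p ^ (Tset k d a w).card = N * p ^ a := by
    rw [Finset.sum_congr rfl (fun w hw => by rw [Tset_card hk hd w (hI w hw)]),
      Finset.sum_const, nsmul_eq_mul]
  have hsum2 : ∑ w ∈ I, ∑ w' ∈ I, corr p (Tset k d a) w w' ≤
      N * (a * (K * ((n : ℝ) ^ (a * d + ℓ) * p ^ (2 * a) / M))) := by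
    refine (Finset.sum_le_card_nsmul _ _ _ hrow).trans ?_
    rw [nsmul_eq_mul]
  rw [hsum1]
  calc c * M / (4 * a * K) = c * (n : ℝ) ^ (a * d + ℓ) * (M / (4 * a * K * (n : ℝ) ^ (a * d + ℓ))) := by
        field_simp
    _ ≤ N * (M / (4 * a * K * (n : ℝ) ^ (a * d + ℓ))) := by gcongr
    _ = q * (N * p ^ a) - q ^ 2 * (N * (a * (K * ((n : ℝ) ^ (a * d + ℓ) * p ^ (2 * a) / M)))) := by
        rw [hq, pow_mul' p 2 a]
        field_simp
        ring
    _ ≤ _ := by gcongr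

lemma gProb_compl (n k : ℕ) (p : ℝ) (A : Finset (Finset (Fin n)) → Prop) :
    gProb n k p A = 1 - ∑ E ∈ (kSets n k).powerset, wt (kSets n k) p E * (if A E then 0 else 1) := by
  rw [eq_sub_iff_add_eq]
  refine Eq.trans ?_ (wt_sum (kSets n k) p)
  unfold gProb
  rw [Finset.sum_filter, ← Finset.sum_add_distrib]
  refine Finset.sum_congr rfl fun E _ => ?_
  unfold wt
  split_ifs <;> ring

lemma gProb_true (n k : ℕ) (p : ℝ) (A : Finset (Finset (Fin n)) → Prop) (h : ∀ E, A E) :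
    gProb n k p A = 1 := by
  rw [gProb_compl]
  simp [h]

lemma gProb_union {n k : ℕ} {p : ℝ} (h0 : 0 ≤ p) (h1 : p ≤ 1) {ι : Type*} (J : Finset ι)
    (A : ι → Finset (Finset (Fin n)) → Prop) (η : ℝ) (h : ∀ j ∈ J, 1 - η ≤ gProb n k p (A j)) :
    1 - J.card * η ≤ gProb n k p (fun E => ∀ j ∈ J, A j E) := by
  rw [gProb_compl]
  apply sub_le_sub_left
  calc _ ≤ ∑ E ∈ (kSets n k).powerset, ∑ j ∈ J, wt (kSets n k) p E * (if A j E then 0 else 1) := by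
        refine Finset.sum_le_sum fun E _ => ?_
        rw [← Finset.mul_sum]
        refine mul_le_mul_of_nonneg_left ?_ (wt_nonneg _ h0 h1 E)
        have hnn : ∀ j ∈ J, (0 : ℝ) ≤ (if A j E then 0 else 1) := by
          intro j _; split_ifs <;> norm_num
        split_ifs with hE
        · exact Finset.sum_nonneg hnn
        · push Not at hE
          obtain ⟨j, hj, hjE⟩ := hE
          refine le_trans ?_ (Finset.single_le_sum hnn hj)
          simp [hjE]
    _ = ∑ j ∈ J, ∑ E ∈ (kSets n k).powerset, wt (kSets n k) p E * (if A j E then 0 else 1) :=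
        Finset.sum_comm
    _ ≤ J.card • η := by
        refine Finset.sum_le_card_nsmul _ _ _ fun j hj => ?_
        have := h j hj
        rw [gProb_compl] at this
        linarith
    _ = _ := by rw [nsmul_eq_mul]

lemma good_of_cand {n k d ℓ a : ℕ} (hkd : d = k - ℓ) (L : Finset (Finset (Fin n)))
    (R Vs : Finset (Fin n)) (E : Finset (Finset (Fin n)))
    (w : Fin (a * d + ℓ) → Fin n) (hw : w ∈ cand ℓ (a * d + ℓ) (L ∩ R.powersetCard ℓ) Vs)
    (hE : Tset k d a w ⊆ E) : GoodPath k ℓ a L R Vs E := by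
  subst hkd
  obtain ⟨hinj, h1, h2, h3⟩ := (Finset.mem_filter.1 hw).2
  rw [Finset.mem_inter, Finset.mem_powersetCard] at h1 h2
  refine ⟨w, ⟨hinj, ?_⟩, h1.1, h1.2.1, h2.1, h2.2.1, ?_⟩
  · intro i hi
    exact hE (Finset.mem_image.2 ⟨i, Finset.mem_range.2 hi, rfl⟩)
  · intro m hm1 hm2
    exact h3 m hm1 (by omega)

lemma good_prob {n k d ℓ a : ℕ} (hk : k = d + ℓ) (hd : 1 ≤ d) (hl : 1 ≤ ℓ) (ha : 1 ≤ a)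
    (had : ℓ ≤ a * d) {p M γ : ℝ} (hγ : 0 < γ)
    (hn : 1 ≤ n) (hp : 0 < p) (hp1 : p ≤ 1) (hM0 : 0 < M)
    (hM : ∀ e, 1 ≤ e → e ≤ a → M ≤ (n : ℝ) ^ (e * d + ℓ) * p ^ e)
    (hnb : 2 * ((a * d + ℓ : ℕ) : ℝ) ^ 2 ≤ γ ^ (a * d + ℓ - 2 * ℓ + 2) * n)
    (L : Finset (Finset (Fin n))) (hL : ∀ S ∈ L, S.card = ℓ) (R Vs : Finset (Fin n))
    (hVs : γ * (n : ℝ) ≤ (Vs.card : ℝ))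
    (hR : γ * (n : ℝ) ^ ℓ ≤ ((L ∩ R.powersetCard ℓ).card : ℝ)) :
    1 - Real.exp (-(γ ^ (a * d + ℓ - 2 * ℓ + 2) / 2 * M /
        (4 * a * ((2 ^ (a * d + ℓ) * (a * d + ℓ) ^ (a * d + ℓ) : ℕ) : ℝ)))) ≤
      gProb n k p (fun E => GoodPath k ℓ a L R Vs E) := by
  set I := cand ℓ (a * d + ℓ) (L ∩ R.powersetCard ℓ) Vs with hI
  have hc := cand_lower hl (by omega) (L ∩ R.powersetCard ℓ)
    (fun S hS => hL S (Finset.mem_inter.1 hS).1) Vs hγ hVs hR hnb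
  have hb := main_bound hk hd hl ha hn hp hp1 hM0 hM I
    (fun w hw => (Finset.mem_filter.1 hw).2.1) hc
  rw [gProb_compl]
  apply sub_le_sub_left
  refine le_trans (Finset.sum_le_sum fun E _ => ?_) hb
  refine mul_le_mul_of_nonneg_left ?_ (wt_nonneg _ hp.le hp1 E)
  unfold noT
  split_ifs with h1 h2 h2 <;> try norm_num
  apply h1
  push Not at h2
  obtain ⟨w, hw, hwE⟩ := h2
  exact good_of_cand (by omega) L R Vs E w hw hwE

lemma M_bound_one {n d a : ℕ} {p C Q : ℝ} (hn : 1 ≤ n) (hQ : Q ≤ C) (hC : 1 ≤ C)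
    (hp : C * (n : ℝ) ^ (-(d : ℝ)) ≤ p) :
    ∀ e, 1 ≤ e → e ≤ a → Q * n ≤ (n : ℝ) ^ (e * d + 1) * p ^ e := by
  intro e he _
  have hn' : (0 : ℝ) < n := by exact_mod_cast hn
  have hx : C ≤ (n : ℝ) ^ d * p := by
    rw [Real.rpow_neg hn'.le, Real.rpow_natCast, ← div_eq_mul_inv, div_le_iff₀ (by positivity)] at hp
    linarith
  have h1 : (n : ℝ) ^ (e * d + 1) * p ^ e = ((n : ℝ) ^ d * p) ^ e * n := by
    rw [mul_pow, ← pow_mul, pow_succ, mul_comm e d]; ring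
  rw [h1]
  refine mul_le_mul_of_nonneg_right ?_ hn'.le
  exact (hQ.trans hx).trans (le_self_pow₀ (hC.trans hx) (by omega))

lemma M_bound_two {n d a ℓ : ℕ} {p ε Q : ℝ} (hn : 1 ≤ n) (hl : 2 ≤ ℓ) (ha : 1 ≤ a) (hε0 : 0 < ε)
    (hε : ε ≤ (ℓ : ℝ) / (3 * (a : ℝ))) (hQ0 : 0 ≤ Q) (hQ : Q ^ 3 ≤ n)
    (hp : (n : ℝ) ^ (-(d : ℝ) - ε) ≤ p) :
    ∀ e, 1 ≤ e → e ≤ a → Q * n ≤ (n : ℝ) ^ (e * d + ℓ) * p ^ e := by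
  intro e he hea
  have hn' : (0 : ℝ) < n := by exact_mod_cast hn
  have hn1 : (1 : ℝ) ≤ n := by exact_mod_cast hn
  have ha' : (0 : ℝ) < a := by exact_mod_cast ha
  have hl' : (2 : ℝ) ≤ ℓ := by exact_mod_cast hl
  have hea' : (e : ℝ) ≤ a := by exact_mod_cast hea
  have h0 : 0 ≤ (n : ℝ) ^ (-(d : ℝ) - ε) := by positivity
  have h1 : (n : ℝ) ^ (e * d + ℓ) * ((n : ℝ) ^ (-(d : ℝ) - ε)) ^ e = (n : ℝ) ^ ((ℓ : ℝ) - e * ε) := by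
    rw [← Real.rpow_natCast, ← Real.rpow_natCast, ← Real.rpow_mul hn'.le, ← Real.rpow_add hn']
    congr 1
    push_cast
    ring
  have h2 : (4 / 3 : ℝ) ≤ (ℓ : ℝ) - e * ε := by
    rw [le_div_iff₀ (by positivity)] at hε
    nlinarith
  have h3 : Q ≤ (n : ℝ) ^ (1 / 3 : ℝ) := by
    have := Real.rpow_le_rpow (by positivity) hQ (by norm_num : (0 : ℝ) ≤ 1 / 3)
    rwa [← Real.rpow_natCast, ← Real.rpow_mul hQ0, show ((3 : ℕ) : ℝ) * (1 / 3) = 1 by norm_num,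
      Real.rpow_one] at this
  calc Q * n ≤ (n : ℝ) ^ (1 / 3 : ℝ) * n := by gcongr
    _ = (n : ℝ) ^ (4 / 3 : ℝ) := by
      nth_rewrite 2 [← Real.rpow_one (n : ℝ)]
      rw [← Real.rpow_add hn']; norm_num
    _ ≤ (n : ℝ) ^ ((ℓ : ℝ) - e * ε) := Real.rpow_le_rpow_of_exponent_le hn1 h2
    _ = _ := h1.symm
    _ ≤ _ := by gcongr

/-- Lemma 2.2(1). -/
theorem gnp_contains_connecting_paths
    (k ℓ a : ℕ) (hk : 3 ≤ k) (hl1 : 1 ≤ ℓ) (hlk : ℓ ≤ k - 1)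
    (ha1 : 1 ≤ a) (ha2 : ℓ ≤ a * (k - ℓ))
    (ε : ℝ) (hε0 : 0 < ε) (hε : ε ≤ (ℓ : ℝ) / (3 * (a : ℝ)))
    (γ : ℝ) (hγ : 0 < γ) :
    ∃ C₀ : ℕ, ∀ C : ℕ, C₀ ≤ C →
      ∀ δ : ℝ, 0 < δ → ∃ n₀ : ℕ, ∀ n : ℕ, n₀ ≤ n →
        ∀ p : ℝ, 0 ≤ p → p ≤ 1 →
          ((2 ≤ ℓ → (n : ℝ) ^ (-((k : ℝ) - (ℓ : ℝ)) - ε) ≤ p) ∧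
           (ℓ = 1 → (C : ℝ) * (n : ℝ) ^ (-((k : ℝ) - 1)) ≤ p)) →
        ∀ L : Finset (Finset (Fin n)), (∀ S ∈ L, S.card = ℓ) →
          (∀ R Vs : Finset (Fin n),
              γ * (n : ℝ) ≤ (Vs.card : ℝ) →
              γ * (n : ℝ) ^ ℓ ≤ ((L ∩ R.powersetCard ℓ).card : ℝ) →
              1 - Real.exp (-(3 * (n : ℝ))) ≤
                gProb n k p (fun E => GoodPath k ℓ a L R Vs E)) ∧
          1 - δ ≤ gProb n k p (fun E =>
            ∀ R Vs : Finset (Fin n),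
              γ * (n : ℝ) ≤ (Vs.card : ℝ) →
              γ * (n : ℝ) ^ ℓ ≤ ((L ∩ R.powersetCard ℓ).card : ℝ) →
              GoodPath k ℓ a L R Vs E) := by
  obtain ⟨d, hd⟩ : ∃ d, d = k - ℓ := ⟨_, rfl⟩
  have hkd : k = d + ℓ := by omega
  have hd1 : 1 ≤ d := by omega
  rw [← hd] at ha2
  have hkR : (k : ℝ) - (ℓ : ℝ) = (d : ℝ) := by rw [hkd]; push_cast; ring
  set c : ℝ := γ ^ (a * d + ℓ - 2 * ℓ + 2) with hc
  set K : ℝ := ((2 ^ (a * d + ℓ) * (a * d + ℓ) ^ (a * d + ℓ) : ℕ) : ℝ) with hK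
  have hc0 : 0 < c := by positivity
  have hK0 : 0 < K := by
    rw [hK]
    exact_mod_cast Nat.mul_pos (by positivity) (Nat.pow_pos (by omega))
  have ha' : (0 : ℝ) < a := by exact_mod_cast ha1
  set Q : ℝ := 24 * a * K / c with hQ
  have hQ0 : 0 < Q := by positivity
  refine ⟨⌈max Q 1⌉₊, fun C hC δ hδ => ?_⟩
  have hC' : max Q 1 ≤ (C : ℝ) := (Nat.le_ceil _).trans (by exact_mod_cast hC)
  have hCQ : Q ≤ C := (le_max_left _ _).trans hC'
  have hC1 : 1 ≤ (C : ℝ) := (le_max_right _ _).trans hC'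
  refine ⟨max 1 (max ⌈2 * ((a * d + ℓ : ℕ) : ℝ) ^ 2 / c⌉₊ (max ⌈Q ^ 3⌉₊ ⌈-Real.log δ⌉₊)),
    fun n hn p hp0 hp1 hp L hL => ?_⟩
  simp only [max_le_iff] at hn
  obtain ⟨hn1, hn2, hn3, hn4⟩ := hn
  have hn2 := Nat.ceil_le.1 hn2
  have hn3 := Nat.ceil_le.1 hn3
  have hn4 := Nat.ceil_le.1 hn4
  have hn' : (0 : ℝ) < n := by exact_mod_cast hn1
  rw [div_le_iff₀ hc0, mul_comm (n : ℝ)] at hn2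
  have hppos : 0 < p ∧ ∀ e, 1 ≤ e → e ≤ a → Q * n ≤ (n : ℝ) ^ (e * d + ℓ) * p ^ e := by
    rcases hl1.eq_or_lt with h | h
    · have h' := hp.2 h.symm
      have e1 : (k : ℝ) - 1 = (d : ℝ) := by rw [← hkR, ← h]; simp
      rw [e1] at h'
      refine ⟨lt_of_lt_of_le (by positivity) h', ?_⟩
      rw [← h]
      exact M_bound_one hn1 hCQ hC1 h'
    · have h' := hp.1 h
      rw [hkR] at h'
      exact ⟨lt_of_lt_of_le (by positivity) h',
        M_bound_two hn1 h ha1 hε0 hε hQ0.le hn3 h'⟩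
  obtain ⟨hppos, hM⟩ := hppos
  have part1 : ∀ R Vs : Finset (Fin n),
              γ * (n : ℝ) ≤ (Vs.card : ℝ) →
              γ * (n : ℝ) ^ ℓ ≤ ((L ∩ R.powersetCard ℓ).card : ℝ) →
              1 - Real.exp (-(3 * (n : ℝ))) ≤
                gProb n k p (fun E => GoodPath k ℓ a L R Vs E) := by
    intro R Vs hVs hR
    have := good_prob hkd hd1 hl1 ha1 ha2 hγ hn1 hppos hp1 (by positivity) hM hn2 L hL R Vs hVs hR
    have e : c / 2 * (Q * n) / (4 * a * K) = 3 * n := by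
      rw [hQ]; field_simp; norm_num
    rw [← hc, ← hK, e] at this
    exact this
  refine ⟨part1, ?_⟩
  have hu := gProb_union (k := k) hp0 hp1
    (Finset.univ : Finset (Finset (Fin n) × Finset (Fin n)))
    (fun x E => γ * (n : ℝ) ≤ (x.2.card : ℝ) →
              γ * (n : ℝ) ^ ℓ ≤ ((L ∩ x.1.powersetCard ℓ).card : ℝ) →
              GoodPath k ℓ a L x.1 x.2 E) (Real.exp (-(3 * (n : ℝ)))) (by
      rintro ⟨R, Vs⟩ _
      by_cases h : γ * (n : ℝ) ≤ (Vs.card : ℝ) ∧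
          γ * (n : ℝ) ^ ℓ ≤ ((L ∩ R.powersetCard ℓ).card : ℝ)
      · have := part1 R Vs h.1 h.2
        simpa only [h.1, h.2, forall_const] using this
      · have : ∀ E, (γ * (n : ℝ) ≤ (Vs.card : ℝ) →
              γ * (n : ℝ) ^ ℓ ≤ ((L ∩ R.powersetCard ℓ).card : ℝ) →
              GoodPath k ℓ a L R Vs E) := fun E h1 h2 => absurd ⟨h1, h2⟩ h
        rw [gProb_true _ _ _ _ this]
        have := Real.exp_pos (-(3 * (n : ℝ)))
        linarith)
  have hcard : ((Finset.univ : Finset (Finset (Fin n) × Finset (Fin n))).card : ℝ) ≤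
      Real.exp (2 * n) := by
    have e2 : (2 : ℝ) ≤ Real.exp 1 := by
      have := Real.add_one_le_exp (1 : ℝ); linarith
    have e3 : ((Finset.univ : Finset (Finset (Fin n) × Finset (Fin n))).card : ℝ)
        = 2 ^ n * 2 ^ n := by
      rw [Finset.card_univ, Fintype.card_prod, Fintype.card_finset, Fintype.card_fin]
      push_cast; ring
    rw [e3]
    calc (2 : ℝ) ^ n * 2 ^ n ≤ Real.exp 1 ^ n * Real.exp 1 ^ n := by gcongr
      _ = Real.exp (2 * n) := by
        rw [← Real.exp_nat_mul, ← Real.exp_add]; congr 1; ring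
  have hfin : ((Finset.univ : Finset (Finset (Fin n) × Finset (Fin n))).card : ℝ) *
      Real.exp (-(3 * (n : ℝ))) ≤ δ := by
    calc _ ≤ Real.exp (2 * n) * Real.exp (-(3 * (n : ℝ))) := by gcongr
      _ = Real.exp (-(n : ℝ)) := by rw [← Real.exp_add]; congr 1; ring
      _ ≤ Real.exp (Real.log δ) := Real.exp_le_exp.2 (by linarith)
      _ = δ := Real.exp_log hδ
  refine (sub_le_sub_left hfin 1).trans (hu.trans (le_of_eq ?_))
  congr 1
  funext E
  apply propext
  constructor
  · intro h R Vs h1 h2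
    exact h (R, Vs) (Finset.mem_univ _) h1 h2
  · intro h x _ h1 h2
    exact h x.1 x.2 h1 h2
end

section
/- Let k ≥ 3, 1 ≤ ℓ ≤ k−1, a ≥ 1, 0 ≤ x ≤ k be integers, and set b = 2x + ℓ + (k−ℓ)a. Suppose 0 < ε ≤ ℓ/(3a) and 1/n ≪ 1/C ≪ γ, 1/a, 1/k. Let G = 𝔾^{(k)}(n,p) with p ≥ n^{−(k−ℓ)−ε} if ℓ ≥ 2 and p ≥ C·n^{−(k−1)} if ℓ = 1. Then with probability 1 − o(1), at most 2·p^a·n^b ordered b-subsets of V(G) span labeled copies of P_{a,x}. -/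
open Finset
open scoped Classical

/-- The number of ordered `b`-tuples of vertices spanning a labeled copy of `P_{a,x}`. -/
noncomputable def paxCount (n k ℓ a x b : ℕ) (E : Finset (Finset (Fin n))) : ℕ :=
  (Finset.univ.filter (fun w : Fin b → Fin n => SpansPax k ℓ a x E w)).card


/-! ### Helper lemmas -/

lemma wt_sum_superset {α : Type*} [DecidableEq α] (S F : Finset α) (hF : F ⊆ S) (p : ℝ) :
    ∑ E ∈ S.powerset, p ^ E.card * (1 - p) ^ (S.card - E.card) * (if F ⊆ E then 1 else 0)
      = p ^ F.card := by
  have h1 : ∑ E ∈ S.powerset, p ^ E.card * (1 - p) ^ (S.card - E.card) *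
      (if F ⊆ E then (1 : ℝ) else 0)
      = ∑ E ∈ S.powerset.filter (fun E => F ⊆ E),
        p ^ E.card * (1 - p) ^ (S.card - E.card) := by
    rw [Finset.sum_filter]
    apply Finset.sum_congr rfl
    intro E _
    split_ifs <;> simp
  have h2 : ∑ E ∈ S.powerset.filter (fun E => F ⊆ E),
        p ^ E.card * (1 - p) ^ (S.card - E.card)
      = ∑ T ∈ (S \ F).powerset, p ^ F.card * (p ^ T.card * (1 - p) ^ ((S \ F).card - T.card)) := by
    refine Finset.sum_bij' (fun E _ => E \ F) (fun T _ => F ∪ T) ?_ ?_ ?_ ?_ ?_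
    · intro E hE
      simp only [Finset.mem_filter, Finset.mem_powerset] at hE ⊢
      exact Finset.sdiff_subset_sdiff hE.1 subset_rfl
    · intro T hT
      simp only [Finset.mem_filter, Finset.mem_powerset] at hT ⊢
      exact ⟨Finset.union_subset hF (hT.trans Finset.sdiff_subset), Finset.subset_union_left⟩
    · intro E hE
      simp only [Finset.mem_filter, Finset.mem_powerset] at hE
      exact Finset.union_sdiff_of_subset hE.2
    · intro T hT
      simp only [Finset.mem_powerset] at hT
      ext y
      simp only [Finset.mem_sdiff, Finset.mem_union]
      constructor
      · tauto
      · intro hy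
        have := hT hy
        simp only [Finset.mem_sdiff] at this
        tauto
    · intro E hE
      simp only [Finset.mem_filter, Finset.mem_powerset] at hE
      have c1 := Finset.card_sdiff_add_card_eq_card hE.2
      have c2 := Finset.card_sdiff_add_card_eq_card hF
      have c3 := Finset.card_le_card hE.1
      rw [← mul_assoc, ← pow_add]
      congr 2 <;> omega
  rw [h1, h2, ← Finset.mul_sum, Finset.sum_pow_mul_eq_add_pow]
  simp

lemma second_moment {α ι : Type*} [DecidableEq α] (S : Finset α) (W : Finset ι) (F : ι → Finset α)
    (hF : ∀ w ∈ W, F w ⊆ S) (a : ℕ) (hc : ∀ w ∈ W, (F w).card = a) (p : ℝ) :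
    ∑ E ∈ S.powerset, p ^ E.card * (1 - p) ^ (S.card - E.card) *
      (((W.filter (fun w => F w ⊆ E)).card : ℝ) - W.card * p ^ a) ^ 2
    = ∑ w ∈ W, ∑ w' ∈ W, (p ^ (F w ∪ F w').card - p ^ (2 * a)) := by
  have hX : ∀ E : Finset α, (((W.filter (fun w => F w ⊆ E)).card : ℝ) - W.card * p ^ a)
      = ∑ w ∈ W, ((if F w ⊆ E then (1 : ℝ) else 0) - p ^ a) := by
    intro E
    rw [Finset.sum_sub_distrib, Finset.sum_boole, Finset.sum_const, nsmul_eq_mul]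
  have htot : ∑ E ∈ S.powerset, p ^ E.card * (1 - p) ^ (S.card - E.card) = 1 := by
    rw [Finset.sum_pow_mul_eq_add_pow]; simp
  simp_rw [hX, sq, Finset.sum_mul_sum, Finset.mul_sum]
  rw [Finset.sum_comm]
  apply Finset.sum_congr rfl
  intro w hw
  rw [Finset.sum_comm]
  apply Finset.sum_congr rfl
  intro w' hw'
  have key : ∀ E : Finset α, p ^ E.card * (1 - p) ^ (S.card - E.card) *
      (((if F w ⊆ E then (1 : ℝ) else 0) - p ^ a) * ((if F w' ⊆ E then (1 : ℝ) else 0) - p ^ a))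
      = p ^ E.card * (1 - p) ^ (S.card - E.card) * (if F w ∪ F w' ⊆ E then 1 else 0)
        - p ^ a * (p ^ E.card * (1 - p) ^ (S.card - E.card) * (if F w ⊆ E then 1 else 0))
        - p ^ a * (p ^ E.card * (1 - p) ^ (S.card - E.card) * (if F w' ⊆ E then 1 else 0))
        + p ^ a * p ^ a * (p ^ E.card * (1 - p) ^ (S.card - E.card)) := by
    intro E
    by_cases h1 : F w ⊆ E <;> by_cases h2 : F w' ⊆ E <;>
      simp [h1, h2, Finset.union_subset_iff] <;> ring
  simp_rw [key]
  rw [Finset.sum_add_distrib, Finset.sum_sub_distrib, Finset.sum_sub_distrib,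
    ← Finset.mul_sum, ← Finset.mul_sum, ← Finset.mul_sum, htot,
    wt_sum_superset S _ (Finset.union_subset (hF w hw) (hF w' hw')),
    wt_sum_superset S _ (hF w hw), wt_sum_superset S _ (hF w' hw'), hc w hw, hc w' hw']
  ring

/-- `s` edges of an `ℓ`-path cover at least `s * (k - ℓ) + ℓ` vertices. -/
lemma cover_card (k d ℓ x : ℕ) (hd : k = d + ℓ) (I : Finset ℕ) (hI : I.Nonempty) :
    I.card * d + ℓ ≤ (I.biUnion (edgeIdx k d x)).card := by
  induction I using Finset.induction_on_max with
  | empty => simp at hI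
  | insert m s hlt ih =>
    have hm : m ∉ s := fun h => lt_irrefl _ (hlt m h)
    rw [Finset.card_insert_of_notMem hm, Finset.biUnion_insert]
    rcases s.eq_empty_or_nonempty with rfl | hs
    · simp only [Finset.biUnion_empty, Finset.union_empty, edgeIdx]
      rw [Finset.card_image_of_injective _ (fun a b h => by simpa using h)]
      simp; omega
    · have hi := ih hs
      have hsub : (Finset.Ico (x + m * d + ℓ) (x + m * d + k)) ∪ s.biUnion (edgeIdx k d x) ⊆
          edgeIdx k d x m ∪ s.biUnion (edgeIdx k d x) := by
        apply Finset.union_subset_union_left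
        intro y hy
        simp only [Finset.mem_Ico] at hy
        simp only [edgeIdx, Finset.mem_image, Finset.mem_range]
        exact ⟨y - (x + m * d), by omega, by omega⟩
      have hdis : Disjoint (Finset.Ico (x + m * d + ℓ) (x + m * d + k))
          (s.biUnion (edgeIdx k d x)) := by
        rw [Finset.disjoint_left]
        intro y hy hy2
        simp only [Finset.mem_Ico] at hy
        simp only [edgeIdx, Finset.mem_biUnion, Finset.mem_image, Finset.mem_range] at hy2
        obtain ⟨i, his, j, hj, rfl⟩ := hy2
        have h1 : (i + 1) * d ≤ m * d := Nat.mul_le_mul_right _ (hlt i his)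
        have h2 : (i + 1) * d = i * d + d := by ring
        omega
      have hc := Finset.card_le_card hsub
      rw [Finset.card_union_of_disjoint hdis, Nat.card_Ico] at hc
      have h3 : (s.card + 1) * d = s.card * d + d := by ring
      omega

/-- index set in `Fin b` of the `i`-th edge -/
def eI (b k d x i : ℕ) : Finset (Fin b) :=
  Finset.univ.filter (fun m : Fin b => (m : ℕ) ∈ edgeIdx k d x i)

lemma eI_map (b k d x i : ℕ) (h : x + i * d + k ≤ b) :
    (eI b k d x i).image (fun m : Fin b => (m : ℕ)) = edgeIdx k d x i := by
  ext y
  simp only [eI, Finset.mem_image, Finset.mem_filter, Finset.mem_univ, true_and]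
  constructor
  · rintro ⟨m, hm, rfl⟩; exact hm
  · intro hy
    have : y < b := by
      simp only [edgeIdx, Finset.mem_image, Finset.mem_range] at hy
      obtain ⟨j, hj, rfl⟩ := hy
      omega
    exact ⟨⟨y, this⟩, hy, rfl⟩

lemma eI_card (b k d x i : ℕ) (h : x + i * d + k ≤ b) : (eI b k d x i).card = k := by
  rw [← Finset.card_image_of_injective (eI b k d x i) Fin.val_injective, eI_map b k d x i h,
    edgeIdx, Finset.card_image_of_injective _ (fun a b h => by simpa using h)]
  simp

lemma eI_inj (b k d x i j : ℕ) (hd : 1 ≤ d) (hk : 1 ≤ k) (hi : x + i * d + k ≤ b)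
    (hj : x + j * d + k ≤ b) (h : eI b k d x i = eI b k d x j) : i = j := by
  have h2 : edgeIdx k d x i = edgeIdx k d x j := by
    rw [← eI_map b k d x i hi, ← eI_map b k d x j hj, h]
  have key : ∀ i j, edgeIdx k d x i = edgeIdx k d x j → j ≤ i := by
    intro i j h
    have : x + i * d ∈ edgeIdx k d x j := by
      rw [← h]; simp only [edgeIdx, Finset.mem_image, Finset.mem_range]
      exact ⟨0, by omega, by omega⟩
    simp only [edgeIdx, Finset.mem_image, Finset.mem_range] at this
    obtain ⟨t, ht, hh⟩ := this
    exact Nat.le_of_mul_le_mul_right (by omega : j * d ≤ i * d) hd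
  exact le_antisymm (key j i h2.symm) (key i j h2)

/-- the `i`-th edge of the tuple -/
noncomputable def eW {n b : ℕ} (k d x : ℕ) (w : Fin b → Fin n) (i : ℕ) : Finset (Fin n) :=
  (eI b k d x i).image w

/-- all edges of the tuple -/
noncomputable def fW {n b : ℕ} (k d x a : ℕ) (w : Fin b → Fin n) : Finset (Finset (Fin n)) :=
  (Finset.range a).image (eW k d x w)

lemma count_bound (n b k d ℓ x a : ℕ) (hn : 1 ≤ n) (hb1 : 1 ≤ b) (hd : k = d + ℓ)
    (hb : ∀ i < a, x + i * d + k ≤ b)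
    (w : Fin b → Fin n) (I : Finset ℕ) (hI : I.Nonempty) (hIa : I ⊆ Finset.range a) :
    (Finset.univ.filter (fun w' : Fin b → Fin n => ∀ i ∈ I, eW k d x w' i ∈ fW k d x a w)).card
      * n ^ (I.card * d + ℓ) ≤ b ^ b * n ^ b := by
  set U : Finset (Fin b) := I.biUnion (eI b k d x) with hU
  set T : Finset (Fin n) := Finset.univ.image w with hT
  have hTc : T.card ≤ b := by
    have := Finset.card_image_le (s := (Finset.univ : Finset (Fin b))) (f := w)
    simpa using this
  have hUc : I.card * d + ℓ ≤ U.card := by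
    have h1 : U.image (fun m : Fin b => (m : ℕ)) = I.biUnion (edgeIdx k d x) := by
      rw [hU, Finset.biUnion_image]
      apply Finset.biUnion_congr rfl
      intro i hi
      exact eI_map b k d x i (hb i (Finset.mem_range.1 (hIa hi)))
    rw [← Finset.card_image_of_injective U Fin.val_injective, h1]
    exact cover_card k d ℓ x hd I hI
  have hUb : U.card ≤ b := by simpa using Finset.card_le_univ U
  have hsub : (Finset.univ.filter
      (fun w' : Fin b → Fin n => ∀ i ∈ I, eW k d x w' i ∈ fW k d x a w)) ⊆
      Fintype.piFinset (fun m : Fin b => if m ∈ U then T else Finset.univ) := by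
    intro w' hw'
    simp only [Finset.mem_filter, Finset.mem_univ, true_and] at hw'
    rw [Fintype.mem_piFinset]
    intro m
    split_ifs with hm
    · rw [hU, Finset.mem_biUnion] at hm
      obtain ⟨i, hi, him⟩ := hm
      have h1 := hw' i hi
      simp only [fW, Finset.mem_image] at h1
      obtain ⟨j, _, hj⟩ := h1
      have h2 : w' m ∈ eW k d x w' i := Finset.mem_image_of_mem _ him
      rw [← hj, eW, Finset.mem_image] at h2
      obtain ⟨t, _, ht⟩ := h2
      rw [hT, ← ht]
      exact Finset.mem_image_of_mem _ (Finset.mem_univ _)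
    · exact Finset.mem_univ _
  have hcard : (Fintype.piFinset (fun m : Fin b => if m ∈ U then T else Finset.univ)).card
      = T.card ^ U.card * n ^ (b - U.card) := by
    rw [Fintype.card_piFinset]
    have : ∀ m : Fin b, (if m ∈ U then T else (Finset.univ : Finset (Fin n))).card
        = if m ∈ U then T.card else n := by
      intro m; split_ifs <;> simp
    simp_rw [this]
    rw [Finset.prod_ite, Finset.prod_const, Finset.prod_const]
    congr 2
    · congr 1; ext; simp
    · rw [Finset.filter_not, Finset.card_sdiff_of_subset (Finset.filter_subset _ _)]
      simp
  calc _ ≤ (T.card ^ U.card * n ^ (b - U.card)) * n ^ U.card := by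
        rw [← hcard]
        exact Nat.mul_le_mul (Finset.card_le_card hsub) (Nat.pow_le_pow_right hn hUc)
    _ = T.card ^ U.card * n ^ b := by
        rw [mul_assoc, ← pow_add, Nat.sub_add_cancel hUb]
    _ ≤ b ^ b * n ^ b := by
        apply Nat.mul_le_mul_right
        exact (Nat.pow_le_pow_left hTc _).trans (Nat.pow_le_pow_right hb1 hUb)

lemma eW_injOn {n b k d x a : ℕ} (hd : 1 ≤ d) (hk : 1 ≤ k)
    (hb : ∀ i < a, x + i * d + k ≤ b) (w : Fin b → Fin n) (hw : Function.Injective w) :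
    Set.InjOn (eW k d x w) (Finset.range a : Finset ℕ) := by
  intro i hi j hj h
  simp only [Finset.coe_range, Set.mem_Iio] at hi hj
  exact eI_inj b k d x i j hd hk (hb i hi) (hb j hj) (Finset.image_injective hw h)

lemma pair_bound {n b k d x a : ℕ} (hd : 1 ≤ d) (hk : 1 ≤ k)
    (hb : ∀ i < a, x + i * d + k ≤ b) (w w' : Fin b → Fin n) (hw : Function.Injective w)
    (hw' : Function.Injective w') (p : ℝ) (hp : 0 ≤ p) :
    p ^ (fW k d x a w ∪ fW k d x a w').card - p ^ (2 * a) ≤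
      ∑ I ∈ (Finset.range a).powerset.filter (fun I => I.Nonempty),
        (if ∀ i ∈ I, eW k d x w' i ∈ fW k d x a w then p ^ (2 * a - I.card) else 0) := by
  set I₀ := (Finset.range a).filter (fun i => eW k d x w' i ∈ fW k d x a w) with hI₀
  have hc : (fW k d x a w).card = a := by
    rw [fW, Finset.card_image_of_injOn (eW_injOn hd hk hb w hw)]; simp
  have hc' : (fW k d x a w').card = a := by
    rw [fW, Finset.card_image_of_injOn (eW_injOn hd hk hb w' hw')]; simp
  have hint : (fW k d x a w ∩ fW k d x a w').card = I₀.card := by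
    have : fW k d x a w ∩ fW k d x a w' = I₀.image (eW k d x w') := by
      ext e
      simp only [Finset.mem_inter, hI₀, Finset.mem_image, Finset.mem_filter]
      constructor
      · rintro ⟨h1, h2⟩
        rw [fW, Finset.mem_image] at h2
        obtain ⟨i, hi, rfl⟩ := h2
        exact ⟨i, ⟨hi, h1⟩, rfl⟩
      · rintro ⟨i, ⟨hi, h1⟩, rfl⟩
        exact ⟨h1, Finset.mem_image_of_mem _ hi⟩
    rw [this, Finset.card_image_of_injOn]
    exact (eW_injOn hd hk hb w' hw').mono (by
      rw [hI₀]; exact_mod_cast Finset.filter_subset _ _)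
  have hun := Finset.card_union_add_card_inter (fW k d x a w) (fW k d x a w')
  have hcard : (fW k d x a w ∪ fW k d x a w').card = 2 * a - I₀.card := by omega
  have hnn : ∀ I ∈ (Finset.range a).powerset.filter (fun I => I.Nonempty),
      0 ≤ (if ∀ i ∈ I, eW k d x w' i ∈ fW k d x a w then p ^ (2 * a - I.card) else 0) := by
    intro I _
    split_ifs <;> positivity
  rw [hcard]
  rcases I₀.eq_empty_or_nonempty with h0 | h0
  · rw [h0]
    simpa using Finset.sum_nonneg hnn
  · have hmem : I₀ ∈ (Finset.range a).powerset.filter (fun I => I.Nonempty) := by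
      simp only [Finset.mem_filter, Finset.mem_powerset]
      exact ⟨Finset.filter_subset _ _, h0⟩
    have h1 := Finset.single_le_sum hnn hmem
    have h2 : ∀ i ∈ I₀, eW k d x w' i ∈ fW k d x a w := by
      intro i hi
      exact (Finset.mem_filter.1 hi).2
    rw [if_pos h2] at h1
    have : 0 ≤ p ^ (2 * a) := by positivity
    linarith

lemma num_bound (n : ℕ) (hn : 1 ≤ n) (d ℓ a s : ℕ) (hl : 1 ≤ ℓ) (ha : 1 ≤ a) (hs : s ≤ a)
    (ε : ℝ) (hε0 : 0 < ε) (hε : ε ≤ (ℓ : ℝ) / (3 * (a : ℝ))) (p : ℝ)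
    (hp : (n : ℝ) ^ (-(d : ℝ) - ε) ≤ p) :
    (n : ℝ) ^ (2 / 3 : ℝ) ≤ p ^ s * (n : ℝ) ^ (s * d + ℓ) := by
  have hn1 : (1 : ℝ) ≤ n := by exact_mod_cast hn
  have hn0 : (0 : ℝ) < n := by linarith
  have h1 : ((n : ℝ) ^ (-(d : ℝ) - ε)) ^ s ≤ p ^ s :=
    pow_le_pow_left₀ (by positivity) hp s
  have h2 : (n : ℝ) ^ (2 / 3 : ℝ) ≤ ((n : ℝ) ^ (-(d : ℝ) - ε)) ^ s * (n : ℝ) ^ (s * d + ℓ) := by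
    rw [← Real.rpow_natCast _ s, ← Real.rpow_natCast _ (s * d + ℓ), ← Real.rpow_mul hn0.le,
      ← Real.rpow_add hn0]
    apply Real.rpow_le_rpow_of_exponent_le hn1
    push_cast
    have ha0 : (0 : ℝ) < a := by exact_mod_cast ha
    have hl1 : (1 : ℝ) ≤ ℓ := by exact_mod_cast hl
    have hsa : (s : ℝ) ≤ a := by exact_mod_cast hs
    rw [le_div_iff₀ (by positivity)] at hε
    have : ε * s ≤ ε * a := mul_le_mul_of_nonneg_left hsa hε0.le
    nlinarith
  exact h2.trans (mul_le_mul_of_nonneg_right h1 (by positivity))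

lemma var_bound {n b k d ℓ x a : ℕ} (hn : 1 ≤ n) (hb1 : 1 ≤ b) (hd : 1 ≤ d) (hk : k = d + ℓ)
    (hl : 1 ≤ ℓ) (ha : 1 ≤ a) (hb : ∀ i < a, x + i * d + k ≤ b)
    (ε : ℝ) (hε0 : 0 < ε) (hε : ε ≤ (ℓ : ℝ) / (3 * (a : ℝ))) (p : ℝ) (hp0 : 0 ≤ p)
    (hp : (n : ℝ) ^ (-(d : ℝ) - ε) ≤ p) :
    (∑ w ∈ Finset.univ.filter (fun w : Fin b → Fin n => Function.Injective w),
      ∑ w' ∈ Finset.univ.filter (fun w : Fin b → Fin n => Function.Injective w),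
        (p ^ (fW k d x a w ∪ fW k d x a w').card - p ^ (2 * a))) * (n : ℝ) ^ (2 / 3 : ℝ)
      ≤ (2 ^ a * b ^ b) * (p ^ a * (n : ℝ) ^ b) ^ 2 := by
  have hn1 : (1 : ℝ) ≤ n := by exact_mod_cast hn
  have hn0 : (0 : ℝ) < n := by linarith
  set W := Finset.univ.filter (fun w : Fin b → Fin n => Function.Injective w) with hW
  have hWc : (W.card : ℝ) ≤ (n : ℝ) ^ b := by
    have : W.card ≤ n ^ b := by simpa using Finset.card_le_univ W
    exact_mod_cast this
  set R := (Finset.range a).powerset.filter (fun I => I.Nonempty) with hR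
  have hRc : (R.card : ℝ) ≤ 2 ^ a := by
    have : R.card ≤ 2 ^ a := by
      simpa using Finset.card_filter_le (Finset.range a).powerset (fun I => I.Nonempty)
    exact_mod_cast this
  have inner : ∀ w ∈ W, (∑ w' ∈ W, (p ^ (fW k d x a w ∪ fW k d x a w').card - p ^ (2 * a)))
      * (n : ℝ) ^ (2 / 3 : ℝ) ≤ 2 ^ a * (b ^ b * (n : ℝ) ^ b * p ^ (2 * a)) := by
    intro w hw
    have hwi : Function.Injective w := (Finset.mem_filter.1 hw).2
    have h1 : ∑ w' ∈ W, (p ^ (fW k d x a w ∪ fW k d x a w').card - p ^ (2 * a)) ≤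
        ∑ w' : Fin b → Fin n, ∑ I ∈ R,
        (if ∀ i ∈ I, eW k d x w' i ∈ fW k d x a w then p ^ (2 * a - I.card) else 0) := by
      refine (Finset.sum_le_sum (fun w' hw' =>
        pair_bound hd (by omega) hb w w' hwi (Finset.mem_filter.1 hw').2 p hp0)).trans ?_
      apply Finset.sum_le_sum_of_subset_of_nonneg (Finset.subset_univ _)
      intro w' _ _
      apply Finset.sum_nonneg
      intro I _
      split_ifs <;> positivity
    rw [Finset.sum_comm] at h1
    refine (mul_le_mul_of_nonneg_right h1 (by positivity)).trans ?_
    rw [Finset.sum_mul]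
    have h2 : ∀ I ∈ R, (∑ w' : Fin b → Fin n,
        (if ∀ i ∈ I, eW k d x w' i ∈ fW k d x a w then p ^ (2 * a - I.card) else 0))
        * (n : ℝ) ^ (2 / 3 : ℝ) ≤ b ^ b * (n : ℝ) ^ b * p ^ (2 * a) := by
      intro I hI
      simp only [hR, Finset.mem_filter, Finset.mem_powerset] at hI
      have hIc : I.card ≤ a := by simpa using Finset.card_le_card hI.1
      have hcb := count_bound n b k d ℓ x a hn hb1 hk hb w I hI.2 hI.1
      have hcb' : ((Finset.univ.filter
          (fun w' : Fin b → Fin n => ∀ i ∈ I, eW k d x w' i ∈ fW k d x a w)).card : ℝ)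
          * (n : ℝ) ^ (I.card * d + ℓ) ≤ (b : ℝ) ^ b * (n : ℝ) ^ b := by exact_mod_cast hcb
      rw [← Finset.sum_filter, Finset.sum_const, nsmul_eq_mul]
      set M : ℝ := ((Finset.univ.filter
          (fun w' : Fin b → Fin n => ∀ i ∈ I, eW k d x w' i ∈ fW k d x a w)).card : ℝ)
      have hM : 0 ≤ M := Nat.cast_nonneg _
      have hnb := num_bound n hn d ℓ a I.card hl ha hIc ε hε0 hε p hp
      calc M * p ^ (2 * a - I.card) * (n : ℝ) ^ (2 / 3 : ℝ)
          ≤ M * p ^ (2 * a - I.card) * (p ^ I.card * (n : ℝ) ^ (I.card * d + ℓ)) :=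
            mul_le_mul_of_nonneg_left hnb (by positivity)
        _ = (M * (n : ℝ) ^ (I.card * d + ℓ)) * (p ^ (2 * a - I.card) * p ^ I.card) := by ring
        _ = (M * (n : ℝ) ^ (I.card * d + ℓ)) * p ^ (2 * a) := by
            rw [← pow_add, Nat.sub_add_cancel (by omega)]
        _ ≤ _ := mul_le_mul_of_nonneg_right hcb' (by positivity)
    refine (Finset.sum_le_sum h2).trans ?_
    rw [Finset.sum_const, nsmul_eq_mul]
    exact mul_le_mul_of_nonneg_right hRc (by positivity)
  rw [Finset.sum_mul]
  refine (Finset.sum_le_sum inner).trans ?_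
  rw [Finset.sum_const, nsmul_eq_mul]
  refine (mul_le_mul_of_nonneg_right hWc (by positivity)).trans (le_of_eq ?_)
  ring

/-- Lemma 2.2(2). With probability `1 - o(1)`, at most `2 p^a n^b`
ordered `b`-subsets of the vertex set span copies of `P_{a,x}`. -/
theorem few_pax_copies
    (k ℓ a x : ℕ) (hk : 3 ≤ k) (hl1 : 1 ≤ ℓ) (hlk : ℓ ≤ k - 1)
    (ha : 1 ≤ a) (hx : x ≤ k)
    (ε : ℝ) (hε0 : 0 < ε) (hε : ε ≤ (ℓ : ℝ) / (3 * (a : ℝ)))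
    (γ : ℝ) (hγ : 0 < γ) :
    ∃ C₀ : ℕ, ∀ C : ℕ, C₀ ≤ C →
      ∀ δ : ℝ, 0 < δ → ∃ n₀ : ℕ, ∀ n : ℕ, n₀ ≤ n →
        ∀ p : ℝ, 0 ≤ p → p ≤ 1 →
          ((2 ≤ ℓ → (n : ℝ) ^ (-((k : ℝ) - (ℓ : ℝ)) - ε) ≤ p) ∧
           (ℓ = 1 → (C : ℝ) * (n : ℝ) ^ (-((k : ℝ) - 1)) ≤ p)) →
          1 - δ ≤ gProb n k p (fun E =>
            (paxCount n k ℓ a x (2 * x + ℓ + (k - ℓ) * a) E : ℝ) ≤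
              2 * p ^ a * (n : ℝ) ^ (2 * x + ℓ + (k - ℓ) * a)) := by
  obtain ⟨d, hdk⟩ : ∃ d, k = d + ℓ := ⟨k - ℓ, by omega⟩
  have hkl : k - ℓ = d := by omega
  have hd : 1 ≤ d := by omega
  rw [hkl]
  set b := 2 * x + ℓ + d * a with hbdef
  have hb1 : 1 ≤ b := by omega
  have hb : ∀ i < a, x + i * d + k ≤ b := by
    intro i hi
    have h1 : (i + 1) * d ≤ a * d := Nat.mul_le_mul_right _ hi
    have h2 : (i + 1) * d = i * d + d := by ring
    have h3 : a * d = d * a := by ring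
    omega
  refine ⟨1, fun C hC δ hδ => ?_⟩
  have hlim : Filter.Tendsto (fun n : ℕ => (n : ℝ) ^ (2 / 3 : ℝ)) Filter.atTop Filter.atTop :=
    (tendsto_rpow_atTop (by norm_num)).comp tendsto_natCast_atTop_atTop
  obtain ⟨n₁, hn₁⟩ := Filter.eventually_atTop.1
    (hlim.eventually_ge_atTop ((2 ^ a * (b : ℝ) ^ b) / δ))
  refine ⟨n₁ + 1, fun n hn p hp0 hp1 hp => ?_⟩
  have hn' : 1 ≤ n := by omega
  have hnr : (1 : ℝ) ≤ n := by exact_mod_cast hn'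
  have hn0 : (0 : ℝ) < n := by linarith
  have hbig := hn₁ n (by omega)
  have hkr : (k : ℝ) = d + ℓ := by exact_mod_cast hdk
  have hpd : (n : ℝ) ^ (-(d : ℝ) - ε) ≤ p := by
    rcases Nat.lt_or_ge ℓ 2 with h | h
    · have hl : ℓ = 1 := by omega
      have h1 := hp.2 hl
      have h2 : (n : ℝ) ^ (-(d : ℝ) - ε) ≤ (n : ℝ) ^ (-((k : ℝ) - 1)) := by
        apply Real.rpow_le_rpow_of_exponent_le hnr
        rw [hkr, hl]; push_cast; linarith
      have h3 : (1 : ℝ) ≤ C := by exact_mod_cast hC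
      have h4 : 0 ≤ (n : ℝ) ^ (-((k : ℝ) - 1)) := by positivity
      nlinarith
    · have h1 := hp.1 h
      rw [hkr] at h1
      simpa using h1
  have hppos : 0 < p := lt_of_lt_of_le (by positivity) hpd
  set W := Finset.univ.filter (fun w : Fin b → Fin n => Function.Injective w) with hW
  have hWc : (W.card : ℝ) ≤ (n : ℝ) ^ b := by
    have : W.card ≤ n ^ b := by simpa using Finset.card_le_univ W
    exact_mod_cast this
  have hX : ∀ E : Finset (Finset (Fin n)),
      paxCount n k ℓ a x b E = (W.filter (fun w => fW k d x a w ⊆ E)).card := by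
    intro E
    rw [paxCount, hW, Finset.filter_filter]
    congr 1
    apply Finset.filter_congr
    intro w _
    simp only [SpansPax, hkl, fW, Finset.image_subset_iff, Finset.mem_range, eW, eI]
  have hFS : ∀ w ∈ W, fW k d x a w ⊆ kSets n k := by
    intro w hw e he
    simp only [fW, Finset.mem_image, Finset.mem_range] at he
    obtain ⟨i, hi, rfl⟩ := he
    rw [kSets, Finset.mem_powersetCard, eW,
      Finset.card_image_of_injective _ (Finset.mem_filter.1 hw).2]
    exact ⟨Finset.subset_univ _, eI_card b k d x i (hb i hi)⟩
  have hFc : ∀ w ∈ W, (fW k d x a w).card = a := by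
    intro w hw
    rw [fW, Finset.card_image_of_injOn
      (eW_injOn hd (by omega) hb w (Finset.mem_filter.1 hw).2)]
    simp
  have hsm := second_moment (kSets n k) W (fW k d x a) hFS a hFc p
  have hvb := var_bound (n := n) (b := b) (k := k) (d := d) (ℓ := ℓ) (x := x) (a := a)
    hn' hb1 hd hdk hl1 ha hb ε hε0 hε p hp0 hpd
  rw [← hW, ← hsm] at hvb
  set μ : ℝ := p ^ a * (n : ℝ) ^ b with hμ
  have hμ0 : 0 < μ := by positivity
  set wt : Finset (Finset (Fin n)) → ℝ := fun E =>
    p ^ E.card * (1 - p) ^ ((kSets n k).card - E.card) with hwt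
  have hwt0 : ∀ E, 0 ≤ wt E := by
    intro E
    have : 0 ≤ 1 - p := by linarith
    simp only [hwt]; positivity
  have htot : ∑ E ∈ (kSets n k).powerset, wt E = 1 := by
    simp only [hwt]
    rw [Finset.sum_pow_mul_eq_add_pow]; simp
  set V := ∑ E ∈ (kSets n k).powerset, p ^ E.card * (1 - p) ^ ((kSets n k).card - E.card) *
      (((W.filter (fun w => fW k d x a w ⊆ E)).card : ℝ) - W.card * p ^ a) ^ 2 with hV
  have hVle : V ≤ δ * μ ^ 2 := by
    rw [div_le_iff₀ hδ] at hbig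
    have h1 : V * (n : ℝ) ^ (2 / 3 : ℝ) ≤ (δ * μ ^ 2) * (n : ℝ) ^ (2 / 3 : ℝ) := by
      refine hvb.trans ?_
      have := mul_le_mul_of_nonneg_right hbig (sq_nonneg μ)
      linarith
    exact le_of_mul_le_mul_right h1 (by positivity)
  unfold gProb
  have hsplit := Finset.sum_filter_add_sum_filter_not (kSets n k).powerset
    (fun E => (paxCount n k ℓ a x b E : ℝ) ≤ 2 * p ^ a * (n : ℝ) ^ b) wt
  rw [htot] at hsplit
  have hbad : (∑ E ∈ (kSets n k).powerset.filter
      (fun E => ¬ (paxCount n k ℓ a x b E : ℝ) ≤ 2 * p ^ a * (n : ℝ) ^ b), wt E) * μ ^ 2 ≤ V := by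
    rw [Finset.sum_mul, hV]
    refine le_trans (Finset.sum_le_sum ?_)
      (Finset.sum_le_sum_of_subset_of_nonneg (Finset.filter_subset _ _) ?_)
    · intro E hE
      have h1 := (Finset.mem_filter.1 hE).2
      rw [hX, not_le] at h1
      apply mul_le_mul_of_nonneg_left _ (hwt0 E)
      apply pow_le_pow_left₀ hμ0.le
      have h2 : (W.card : ℝ) * p ^ a ≤ (n : ℝ) ^ b * p ^ a :=
        mul_le_mul_of_nonneg_right hWc (by positivity)
      have h3 : μ = (n : ℝ) ^ b * p ^ a := by rw [hμ]; ring
      have h4 : 2 * p ^ a * (n : ℝ) ^ b = 2 * μ := by rw [hμ]; ring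
      linarith
    · intro E _ _
      exact mul_nonneg (hwt0 E) (sq_nonneg _)
  have hbad2 : (∑ E ∈ (kSets n k).powerset.filter
      (fun E => ¬ (paxCount n k ℓ a x b E : ℝ) ≤ 2 * p ^ a * (n : ℝ) ^ b), wt E) ≤ δ :=
    le_of_mul_le_mul_right (hbad.trans hVle) (by positivity)
  linarith
end
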